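/- arXiv:2403.03381 — 2 statements merged into one kernel-verified Lean document; each statement's English description precedes it below -/
import Mathlib

section
/- For every natural number α ∈ {8β : β ∈ {9} ∪ {12, 13, ..., 83} ∪ {85, 90, 93}}, there exists a near-extremal ternary self-dual code C of length 36 whose number of codewords of Hamming weight 9 equals α. -/
/-- `C` is a self-dual ternary code of length 36: it coincides with its orthogonal
complement with respect to the standard dot product on `(ZMod 3)^36`. -/
def IsSelfDualCode (C : Submodule (ZMod 3) (Fin 36 → ZMod 3)) : Prop :=
  ∀ x : Fin 36 → ZMod 3, x ∈ C ↔ ∀ y ∈ C, ∑ i, x i * y i = 0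

/-- The minimum (Hamming) weight of `C` is 9, i.e. `C` is near-extremal. -/
def MinWeightNine (C : Submodule (ZMod 3) (Fin 36 → ZMod 3)) : Prop :=
  IsLeast {w : ℕ | ∃ x ∈ C, x ≠ 0 ∧ hammingNorm x = w} 9

/-- The number of codewords of `C` of Hamming weight exactly 9. -/
noncomputable def A9 (C : Submodule (ZMod 3) (Fin 36 → ZMod 3)) : ℕ :=
  Nat.card {x : Fin 36 → ZMod 3 // x ∈ C ∧ hammingNorm x = 9}

/-!
A code with generator matrix `[I | A]`, where `A` is square and `A * Aᵀ = -1`, is self-dual, and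
`[I | Aᵀ]` generates the same code with its two halves exchanged and one of them negated. A
codeword of weight at most `9` has weight at most `4` on one of its halves, so all of them are
found among the encodings under `A` and `Aᵀ` of the ternary vectors of weight at most `4`. As
Hamming weights reduce modulo `3` to the quadratic form `x ⬝ᵥ x`, even `A * Aᵀ = -1` can be read
off from the weights of these codewords. Each code of the theorem is given by an explicit `A`, and
the weights of the encodings of all `56137` vectors are computed at once, in the 16-bit lanes of
one natural number.
-/

open Matrix

section SystematicCode

theorem append_eq_append_iff {α : Type*} {n m : ℕ} {a c : Fin n → α} {b d : Fin m → α} :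
    Fin.append a b = Fin.append c d ↔ a = c ∧ b = d :=
  (Fin.appendEquiv n m).injective.eq_iff.trans Prod.mk_inj

theorem append_dotProduct_append {α : Type*} [NonUnitalNonAssocSemiring α] {n m : ℕ}
    (a c : Fin n → α) (b d : Fin m → α) :
    Fin.append a b ⬝ᵥ Fin.append c d = a ⬝ᵥ c + b ⬝ᵥ d := by
  simp [dotProduct, Fin.sum_univ_add]

theorem hammingNorm_append {α : Type*} [Zero α] [DecidableEq α] {n m : ℕ} (u : Fin n → α)
    (v : Fin m → α) : hammingNorm (Fin.append u v) = hammingNorm u + hammingNorm v := by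
  simp [hammingNorm, Finset.card_filter, Fin.sum_univ_add]

theorem hammingNorm_neg {ι α : Type*} [Fintype ι] [AddGroup α] [DecidableEq α] (u : ι → α) :
    hammingNorm (-u) = hammingNorm u :=
  hammingNorm_comp (fun _ ↦ Neg.neg) (fun _ ↦ neg_injective) fun _ ↦ neg_zero

variable {R : Type*} [CommRing R] {n m : ℕ}

/-- The encoder of the linear code with systematic generator matrix `[I | A]`. -/
def systematicEncoder (A : Matrix (Fin n) (Fin m) R) : (Fin n → R) →ₗ[R] Fin (n + m) → R where
  toFun u := Fin.append u (u ᵥ* A)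
  map_add' u v := by
    ext i
    refine Fin.addCases ?_ ?_ i <;> simp [add_vecMul]
  map_smul' c u := by
    ext i
    refine Fin.addCases ?_ ?_ i <;> simp [smul_vecMul]

/-- The linear code with systematic generator matrix `[I | A]`. -/
def systematicCode (A : Matrix (Fin n) (Fin m) R) : Submodule R (Fin (n + m) → R) :=
  LinearMap.range (systematicEncoder A)

theorem systematicEncoder_apply (A : Matrix (Fin n) (Fin m) R) (u : Fin n → R) :
    systematicEncoder A u = Fin.append u (u ᵥ* A) :=
  rfl

theorem systematicEncoder_injective (A : Matrix (Fin n) (Fin m) R) :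
    Function.Injective (systematicEncoder A) :=
  fun _ _ h ↦ (append_eq_append_iff.mp h).1

theorem append_mem_systematicCode {A : Matrix (Fin n) (Fin m) R} {a : Fin n → R} {b : Fin m → R} :
    Fin.append a b ∈ systematicCode A ↔ b = a ᵥ* A := by
  simp only [systematicCode, LinearMap.mem_range, systematicEncoder_apply, append_eq_append_iff]
  exact ⟨fun ⟨_, hu, hb⟩ ↦ hu ▸ hb.symm, fun hb ↦ ⟨a, rfl, hb.symm⟩⟩

theorem append_dotProduct_systematicEncoder (A : Matrix (Fin n) (Fin m) R) (a u : Fin n → R)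
    (b : Fin m → R) :
    Fin.append a b ⬝ᵥ systematicEncoder A u = (a + b ᵥ* Aᵀ) ⬝ᵥ u := by
  rw [systematicEncoder_apply, append_dotProduct_append, add_dotProduct, ← dotProduct_mulVec,
    mulVec_transpose]

variable [DecidableEq R]

/-- The Hamming weight of the codeword of `[I | A]` with information part `u`. -/
def codeWeight (A : Matrix (Fin n) (Fin m) R) (u : Fin n → R) : ℕ :=
  hammingNorm u + hammingNorm (u ᵥ* A)

theorem hammingNorm_systematicEncoder (A : Matrix (Fin n) (Fin m) R) (u : Fin n → R) :
    hammingNorm (systematicEncoder A u) = codeWeight A u :=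
  hammingNorm_append _ _

theorem codeWeight_le (A : Matrix (Fin n) (Fin m) R) (u : Fin n → R) :
    codeWeight A u ≤ n + m := by
  have := add_le_add (hammingNorm_le_card_fintype (x := u))
    (hammingNorm_le_card_fintype (x := u ᵥ* A))
  rwa [Fintype.card_fin, Fintype.card_fin] at this

theorem lt_hammingNorm_of_mem_systematicCode {A : Matrix (Fin n) (Fin m) R} {d : ℕ}
    (h : ∀ u ≠ 0, d < codeWeight A u) : ∀ x ∈ systematicCode A, x ≠ 0 → d < hammingNorm x := by
  rintro _ ⟨u, rfl⟩ hu
  rw [hammingNorm_systematicEncoder]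
  exact h u (ne_of_apply_ne (systematicEncoder A) (by rwa [map_zero]))

theorem card_systematicCode_hammingNorm_eq [Fintype R] (A : Matrix (Fin n) (Fin m) R) (w : ℕ) :
    Nat.card {x // x ∈ systematicCode A ∧ hammingNorm x = w} =
      Finset.card {u | codeWeight A u = w} := by
  classical
  rw [← Fintype.card_subtype, ← Nat.card_eq_fintype_card]
  refine (Nat.card_congr (Equiv.ofBijective
    (fun u ↦ ⟨systematicEncoder A u.1, ⟨u.1, rfl⟩, (hammingNorm_systematicEncoder A u).trans u.2⟩)
    ⟨fun u v h ↦ Subtype.ext (systematicEncoder_injective A (congrArg Subtype.val h)), ?_⟩)).symm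
  rintro ⟨_, ⟨u, rfl⟩, hu⟩
  exact ⟨⟨u, (hammingNorm_systematicEncoder A u).symm.trans hu⟩, rfl⟩

theorem eq_zero_of_card_codeWeight_le_eq_one {s t : ℕ} [Fintype R] {A : Matrix (Fin n) (Fin m) R}
    (h : Finset.card {u | codeWeight A u ≤ s ∧ hammingNorm u ≤ t} = 1) (u : Fin n → R)
    (hu : hammingNorm u ≤ t) (hweight : codeWeight A u ≤ s) : u = 0 := by
  have codeWeight_zero : codeWeight A 0 = 0 := by simp [codeWeight]
  exact Finset.card_le_one.mp h.le u (by simp [hu, hweight]) 0 (by simp [codeWeight_zero])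

theorem card_codeWeight_le_succ [Fintype R] (A : Matrix (Fin n) (Fin m) R) (s t : ℕ) :
    Finset.card {u | codeWeight A u ≤ s + 1 ∧ hammingNorm u ≤ t} =
      Finset.card {u | codeWeight A u ≤ s ∧ hammingNorm u ≤ t} +
        Finset.card {u | codeWeight A u = s + 1 ∧ hammingNorm u ≤ t} := by
  rw [← Finset.card_union_of_disjoint]
  · congr 1
    ext u
    simp only [Finset.mem_union, Finset.mem_filter_univ]
    omega
  · refine Finset.disjoint_filter.mpr fun u _ ↦ ?_
    omega

end SystematicCode

section SelfDual

variable {R : Type*} [CommRing R] {n : ℕ} {A : Matrix (Fin n) (Fin n) R}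

theorem transpose_mul_self_eq_neg_one (hA : A * Aᵀ = -1) : Aᵀ * A = -1 := by
  rw [← neg_eq_iff_eq_neg, ← Matrix.neg_mul, mul_eq_one_comm, Matrix.mul_neg, hA, neg_neg]

theorem vecMul_vecMul_transpose (hA : A * Aᵀ = -1) (u : Fin n → R) : u ᵥ* A ᵥ* Aᵀ = -u := by
  rw [vecMul_vecMul, hA, vecMul_neg, vecMul_one]

theorem vecMul_transpose_vecMul (hA : A * Aᵀ = -1) (u : Fin n → R) : u ᵥ* Aᵀ ᵥ* A = -u := by
  rw [vecMul_vecMul, transpose_mul_self_eq_neg_one hA, vecMul_neg, vecMul_one]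

theorem mem_systematicCode_iff_forall_dotProduct_eq_zero (hA : A * Aᵀ = -1)
    {x : Fin (n + n) → R} : x ∈ systematicCode A ↔ ∀ y ∈ systematicCode A, x ⬝ᵥ y = 0 := by
  obtain ⟨a, b, rfl⟩ : ∃ a b, x = Fin.append a b := ⟨_, _, (Fin.append_castAdd_natAdd).symm⟩
  have orthogonal_iff : (∀ y ∈ systematicCode A, Fin.append a b ⬝ᵥ y = 0) ↔ a = -(b ᵥ* Aᵀ) := by
    simp only [systematicCode, LinearMap.mem_range, forall_exists_index,
      forall_apply_eq_imp_iff, append_dotProduct_systematicEncoder, dotProduct_eq_zero_iff,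
      add_eq_zero_iff_eq_neg]
  rw [orthogonal_iff, append_mem_systematicCode]
  constructor
  · rintro rfl
    rw [vecMul_vecMul_transpose hA, neg_neg]
  · rintro rfl
    rw [neg_vecMul, vecMul_transpose_vecMul hA, neg_neg]

variable [DecidableEq R]

theorem codeWeight_transpose_vecMul (hA : A * Aᵀ = -1) (u : Fin n → R) :
    codeWeight Aᵀ (u ᵥ* A) = codeWeight A u := by
  rw [codeWeight, codeWeight, vecMul_vecMul_transpose hA, hammingNorm_neg, add_comm]

theorem lt_codeWeight_of_light {t : ℕ} (hA : A * Aᵀ = -1)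
    (h : ∀ u, hammingNorm u ≤ t → codeWeight A u ≤ 2 * t → u = 0)
    (h' : ∀ u, hammingNorm u ≤ t → codeWeight Aᵀ u ≤ 2 * t → u = 0) {u : Fin n → R}
    (hu : u ≠ 0) : 2 * t < codeWeight A u := by
  by_contra! hle
  rcases le_or_gt (hammingNorm u) t with hlight | hheavy
  · exact hu (h u hlight hle)
  · have hparity : hammingNorm (u ᵥ* A) ≤ t := by
      unfold codeWeight at hle
      omega
    have hzero : u ᵥ* A = 0 := h' _ hparity ((codeWeight_transpose_vecMul hA u).trans_le hle)
    have := vecMul_vecMul_transpose hA u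
    rw [hzero, zero_vecMul, zero_eq_neg] at this
    exact hu this

theorem card_codeWeight_eq_add_card_transpose [Fintype R] (hA : A * Aᵀ = -1) (t : ℕ) :
    Finset.card {u | codeWeight A u = 2 * t + 1} =
      Finset.card {u | codeWeight A u = 2 * t + 1 ∧ hammingNorm u ≤ t} +
        Finset.card {u | codeWeight Aᵀ u = 2 * t + 1 ∧ hammingNorm u ≤ t} := by
  rw [← Finset.card_filter_add_card_filter_not (fun u ↦ hammingNorm u ≤ t),
    Finset.filter_filter, Finset.filter_filter]
  congr 1
  refine Finset.card_nbij' (· ᵥ* A) (fun v ↦ -(v ᵥ* Aᵀ)) ?_ ?_ ?_ ?_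
  · intro u hu
    simp only [Finset.mem_coe, Finset.mem_filter_univ, codeWeight_transpose_vecMul hA] at hu ⊢
    unfold codeWeight at hu ⊢
    omega
  · intro v hv
    rw [Finset.mem_coe, Finset.mem_filter_univ, codeWeight] at hv ⊢
    rw [neg_vecMul, vecMul_transpose_vecMul hA, neg_neg, hammingNorm_neg]
    omega
  · intro u _
    simp only [vecMul_vecMul_transpose hA, neg_neg]
  · intro v _
    simp only [neg_vecMul, vecMul_transpose_vecMul hA, neg_neg]

end SelfDual

section WeightForm

variable {n m : ℕ}

theorem hammingNorm_single_add_single_le {R : Type*} [AddZeroClass R] [DecidableEq R]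
    (i j : Fin n) (a b : R) : hammingNorm (Pi.single i a + Pi.single j b : Fin n → R) ≤ 2 := by
  refine (Finset.card_le_card fun k hk ↦ ?_).trans (Finset.card_le_two (a := i) (b := j))
  contrapose! hk
  simp_all

theorem eq_zero_of_dotProduct_mulVec_self_eq_zero {R : Type*} [CommRing R] [NoZeroDivisors R]
    [NeZero (2 : R)] [DecidableEq R] {S : Matrix (Fin n) (Fin n) R} (hS : S.IsSymm)
    (h : ∀ u, hammingNorm u ≤ 2 → u ⬝ᵥ S *ᵥ u = 0) : S = 0 := by
  have expand (i j : Fin n) : S i i + S j j + 2 * S i j = 0 := by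
    have := h _ (hammingNorm_single_add_single_le i j 1 1)
    simp only [mulVec_add, mulVec_single_one, add_dotProduct, single_one_dotProduct,
      Pi.add_apply, col_apply, hS.apply i j] at this
    linear_combination this
  have diagonal (i : Fin n) : S i i = 0 := by
    have : 2 * (2 * S i i) = 0 := by linear_combination expand i i
    simpa [NeZero.ne (2 : R)] using this
  ext i j
  simpa [diagonal, NeZero.ne (2 : R)] using expand i j

theorem cast_hammingNorm_eq_dotProduct_self (x : Fin n → ZMod 3) :
    (hammingNorm x : ZMod 3) = x ⬝ᵥ x := by
  have mul_self_eq_ite : ∀ a : ZMod 3, a * a = if a ≠ 0 then 1 else 0 := by decide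
  simp only [hammingNorm, dotProduct, mul_self_eq_ite, Finset.sum_boole]

theorem cast_codeWeight_eq_dotProduct_mulVec (A : Matrix (Fin n) (Fin m) (ZMod 3))
    (u : Fin n → ZMod 3) : (codeWeight A u : ZMod 3) = u ⬝ᵥ (1 + A * Aᵀ) *ᵥ u := by
  rw [codeWeight, Nat.cast_add, cast_hammingNorm_eq_dotProduct_self,
    cast_hammingNorm_eq_dotProduct_self, add_mulVec, one_mulVec, dotProduct_add, ← mulVec_mulVec,
    dotProduct_mulVec u, mulVec_transpose]

theorem mul_transpose_eq_neg_one_of_three_dvd_codeWeight {A : Matrix (Fin n) (Fin m) (ZMod 3)}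
    (h : ∀ u, hammingNorm u ≤ 2 → 3 ∣ codeWeight A u) : A * Aᵀ = -1 := by
  have : NeZero (2 : ZMod 3) := ⟨by decide⟩
  refine eq_neg_of_add_eq_zero_right (eq_zero_of_dotProduct_mulVec_self_eq_zero
    (isSymm_one.add (by rw [IsSymm, transpose_mul, transpose_transpose])) fun u hu ↦ ?_)
  rw [← cast_codeWeight_eq_dotProduct_mulVec, ZMod.natCast_eq_zero_iff]
  exact h u hu

end WeightForm

section LightVectors

/-- The list of all ternary vectors of length `n` and Hamming weight at most `k`. -/
def lightVectors : (n k : ℕ) → List (Fin n → ZMod 3)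
  | 0, _ => [![]]
  | n + 1, 0 => (lightVectors n 0).map (vecCons 0)
  | n + 1, k + 1 => (lightVectors n (k + 1)).map (vecCons 0) ++
      ((lightVectors n k).map (vecCons 1) ++ (lightVectors n k).map (vecCons 2))

theorem hammingNorm_vecCons {α : Type*} [Zero α] [DecidableEq α] {n : ℕ} (a : α) (u : Fin n → α) :
    hammingNorm (vecCons a u) = (if a ≠ 0 then 1 else 0) + hammingNorm u := by
  simp only [hammingNorm, Finset.card_filter, Fin.sum_univ_succ, cons_val_zero, cons_val_succ]
  rfl

theorem vecCons_injective {α : Type*} {n : ℕ} (a : α) :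
    Function.Injective (vecCons a : (Fin n → α) → Fin (n + 1) → α) :=
  fun _ _ h ↦ (vecCons_inj.mp h).2

theorem vecCons_mem_map_vecCons {α : Type*} {n : ℕ} {a b : α} {u : Fin n → α}
    {l : List (Fin n → α)} : vecCons a u ∈ l.map (vecCons b) ↔ b = a ∧ u ∈ l := by
  simp [vecCons_inj, and_comm]

theorem disjoint_map_vecCons {α : Type*} {n : ℕ} {a b : α} (hab : a ≠ b)
    (l l' : List (Fin n → α)) : (l.map (vecCons a)).Disjoint (l'.map (vecCons b)) := by
  simp [List.Disjoint, vecCons_inj, hab.symm]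

theorem mem_lightVectors {n k : ℕ} {u : Fin n → ZMod 3} :
    u ∈ lightVectors n k ↔ hammingNorm u ≤ k := by
  induction n generalizing k with
  | zero => simp [lightVectors, hammingNorm, Subsingleton.elim u ![]]
  | succ n ih =>
    rw [← cons_head_tail u]
    generalize vecHead u = a, vecTail u = v
    have ha : a = 0 ∨ a = 1 ∨ a = 2 := by decide +revert
    have h02 : (0 : ZMod 3) ≠ 2 := by decide
    have h12 : (1 : ZMod 3) ≠ 2 := by decide
    cases k <;> rcases ha with rfl | rfl | rfl <;>
      simp [lightVectors, vecCons_mem_map_vecCons, -List.mem_map, hammingNorm_vecCons, ih,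
        add_comm 1, h02, h12, h02.symm, h12.symm]

theorem nodup_lightVectors (n k : ℕ) : (lightVectors n k).Nodup := by
  induction n generalizing k with
  | zero => exact List.nodup_singleton _
  | succ n ih =>
    have nodup_map (a : ZMod 3) (k : ℕ) : ((lightVectors n k).map (vecCons a)).Nodup :=
      (ih k).map (vecCons_injective a)
    cases k with
    | zero => exact nodup_map 0 0
    | succ k =>
      refine (nodup_map 0 _).append ((nodup_map 1 k).append (nodup_map 2 k) ?_)
        (List.disjoint_append_right.mpr ⟨?_, ?_⟩) <;>
      exact disjoint_map_vecCons (by decide) _ _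

theorem card_filter_and_hammingNorm_le {n k : ℕ} (p : (Fin n → ZMod 3) → Prop) [DecidablePred p] :
    Finset.card {u | p u ∧ hammingNorm u ≤ k} = (lightVectors n k).countP (p ·) := by
  rw [List.countP_eq_length_filter,
    ← List.toFinset_card_of_nodup ((nodup_lightVectors n k).filter _)]
  congr 1
  ext u
  simp [mem_lightVectors, and_comm]

end LightVectors

section Lanes

variable {α : Type*}

/-- The values of `f` along `l`, packed into a single number as consecutive 16-bit lanes. -/
def pack (l : List α) (f : α → ℕ) : ℕ :=
  Nat.ofDigits (2 ^ 16) (l.map f)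

/-- Concatenates the lanes of `x` and `y`, where `x` has `size` lanes. -/
def appendLanes (size x y : ℕ) : ℕ :=
  x + y <<< (16 * size)

/-- Extracts bit `b` of every lane of `x`; `ones` is the number all of whose lanes are one. -/
def bitLanes (b ones x : ℕ) : ℕ :=
  (x >>> b) &&& ones

/-- Replaces every lane `d < 192` of `x` by `1` if `3 ∤ d` and by `0` otherwise. Since `341 / 1024`
is nearly `1 / 3`, the lower ten bits of `341 * d + 256` are nearly `256`, `597` or `938` according
to `d` modulo `3`, and only `597` and `938` have bit `9` set. -/
def nonzeroLanes (ones x : ℕ) : ℕ :=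
  bitLanes 9 ones (341 * x + 256 * ones)

/-- The number of lanes of `x` that are at most `s`, when `s < 64` and all lanes are at most `64`:
bit `6` of `64 + s - d` is set exactly if `d ≤ s`, and reducing modulo `2 ^ 16 - 1` adds up the
lanes. -/
def countLe (s ones x : ℕ) : ℕ :=
  bitLanes 6 ones ((64 + s) * ones - x) % (2 ^ 16 - 1)

@[simp]
theorem pack_nil (f : α → ℕ) : pack [] f = 0 :=
  rfl

@[simp]
theorem pack_cons (a : α) (l : List α) (f : α → ℕ) :
    pack (a :: l) f = f a + 2 ^ 16 * pack l f := by
  simp [pack, Nat.ofDigits_cons]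

theorem pack_map {β : Type*} (g : β → α) (l : List β) (f : α → ℕ) :
    pack (l.map g) f = pack l (f ∘ g) := by
  rw [pack, pack, List.map_map]

theorem pack_congr {l : List α} {f g : α → ℕ} (h : ∀ a ∈ l, f a = g a) : pack l f = pack l g :=
  congrArg (Nat.ofDigits _) (List.map_congr_left h)

theorem pack_append (l l' : List α) (f : α → ℕ) :
    pack (l ++ l') f = appendLanes l.length (pack l f) (pack l' f) := by
  rw [pack, List.map_append, Nat.ofDigits_append, List.length_map, appendLanes,
    Nat.shiftLeft_eq, pow_mul, mul_comm (pack l' f)]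
  rfl

theorem pack_add (l : List α) (f g : α → ℕ) :
    pack l (fun a ↦ f a + g a) = pack l f + pack l g := by
  induction l with
  | nil => rfl
  | cons a l ih =>
    simp only [pack_cons, ih]
    ring

theorem pack_const_mul (c : ℕ) (l : List α) (f : α → ℕ) :
    pack l (fun a ↦ c * f a) = c * pack l f := by
  rw [pack, pack, Nat.mul_ofDigits, List.map_map]
  rfl

theorem pack_const (c : ℕ) (l : List α) : pack l (fun _ ↦ c) = c * pack l 1 := by
  simp [← pack_const_mul]

theorem pack_sum {ι : Type*} (s : Finset ι) (l : List α) (f : ι → α → ℕ) :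
    pack l (fun a ↦ ∑ i ∈ s, f i a) = ∑ i ∈ s, pack l (f i) := by
  classical
  induction s using Finset.induction_on with
  | empty => simp [pack_const]
  | insert i s hi ih => simp only [Finset.sum_insert hi, pack_add, ih]

theorem pack_sub {l : List α} {f g : α → ℕ} (h : ∀ a ∈ l, g a ≤ f a) :
    pack l (fun a ↦ f a - g a) = pack l f - pack l g := by
  have : pack l f = pack l (fun a ↦ f a - g a) + pack l g := by
    rw [← pack_add]
    exact pack_congr fun a ha ↦ (Nat.sub_add_cancel (h a ha)).symm
  omega

theorem eq_zero_of_pack_eq_zero {l : List α} {f : α → ℕ} (h : pack l f = 0) :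
    ∀ a ∈ l, f a = 0 := by
  induction l with
  | nil => simp
  | cons a l ih =>
    rw [pack_cons] at h
    rw [List.forall_mem_cons]
    exact ⟨by omega, ih (by omega)⟩

theorem bitLanes_pack {b : ℕ} (hb : b < 16) {l : List α} {f : α → ℕ}
    (hf : ∀ a ∈ l, f a < 2 ^ 16) :
    bitLanes b (pack l 1) (pack l f) = pack l fun a ↦ ((f a).testBit b).toNat := by
  induction l with
  | nil => simp [bitLanes]
  | cons a l ih =>
    rw [List.forall_mem_cons] at hf
    have toNat_lt (c : Bool) : c.toNat < 2 ^ 16 := (Bool.toNat_lt c).trans (by norm_num)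
    refine Nat.eq_of_testBit_eq fun i ↦ ?_
    rw [pack_cons a l fun a ↦ ((f a).testBit b).toNat, ← ih hf.2, add_comm,
      Nat.testBit_two_pow_mul_add _ (toNat_lt _)]
    simp only [pack_cons, add_comm _ (2 ^ 16 * _), bitLanes, Pi.one_apply, Nat.testBit_and,
      Nat.testBit_shiftRight, Nat.testBit_two_pow_mul_add _ hf.1,
      Nat.testBit_two_pow_mul_add _ (Nat.one_lt_two_pow (by norm_num : 16 ≠ 0))]
    by_cases hi : i < 16
    · rw [if_pos hi, if_pos hi]
      cases i with
      | zero => cases (f a).testBit b <;> simp [hb]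
      | succ i => cases (f a).testBit b <;> simp [Nat.testBit_succ]
    · rw [if_neg (by omega), if_neg hi, if_neg hi, Nat.add_sub_assoc (by omega)]

theorem pack_mod_eq_sum {l : List α} {f : α → ℕ} (h : (l.map f).sum < 2 ^ 16 - 1) :
    pack l f % (2 ^ 16 - 1) = (l.map f).sum :=
  calc pack l f % (2 ^ 16 - 1) = Nat.ofDigits 1 (l.map f) % (2 ^ 16 - 1) :=
        Nat.ofDigits_mod (2 ^ 16) (2 ^ 16 - 1) _
    _ = (l.map f).sum := by rw [Nat.ofDigits_one, Nat.mod_eq_of_lt h]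

theorem nonzeroLanes_pack {l : List α} {f : α → ℕ} (hf : ∀ a ∈ l, f a < 192) :
    nonzeroLanes (pack l 1) (pack l f) = pack l fun a ↦ if (f a : ZMod 3) ≠ 0 then 1 else 0 := by
  have testBit_nine : ∀ d : ℕ, d < 192 →
      ((341 * d + 256).testBit 9).toNat = if (d : ZMod 3) ≠ 0 then 1 else 0 := by
    decide +kernel
  rw [nonzeroLanes, ← pack_const, ← pack_const_mul, ← pack_add, bitLanes_pack (by norm_num)]
  · exact pack_congr fun a ha ↦ testBit_nine _ (hf a ha)
  · intro a ha
    have := hf a ha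
    omega

theorem sum_map_toNat_eq_countP (p : α → Bool) (l : List α) :
    (l.map fun a ↦ (p a).toNat).sum = l.countP p := by
  induction l with
  | nil => rfl
  | cons a l ih => cases h : p a <;> simp [ih, h, add_comm]

theorem countLe_pack {s : ℕ} (hs : s < 64) {l : List α} (hl : l.length < 2 ^ 16 - 1) {f : α → ℕ}
    (hf : ∀ a ∈ l, f a ≤ 64) : countLe s (pack l 1) (pack l f) = l.countP (f · ≤ s) := by
  have testBit_six : ∀ a ∈ l, ((64 + s - f a).testBit 6).toNat = (decide (f a ≤ s)).toNat := by
    intro a ha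
    have := hf a ha
    rw [Nat.testBit_eq_decide_div_mod_eq]
    congr 1
    rw [decide_eq_decide]
    omega
  have sum_eq := sum_map_toNat_eq_countP (f · ≤ s) l
  rw [countLe, ← pack_const, ← pack_sub fun a ha ↦ (hf a ha).trans (Nat.le_add_right 64 s),
    bitLanes_pack (by norm_num) fun a _ ↦ by omega, pack_congr testBit_six, pack_mod_eq_sum,
    sum_eq]
  exact sum_eq.trans_lt (List.countP_le_length.trans_lt hl)

end Lanes

section StrictEvaluation

/-- Call by value: `strictly n k` is `k n`, but recursing on `n` makes the kernel evaluate `n` to a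
numeral before entering `k`, so that several uses of `n` in `k` share one evaluation. -/
def strictly {γ : Type*} (n : ℕ) (k : ℕ → γ) : γ :=
  Nat.rec (k 0) (fun m _ ↦ k (m + 1)) n

/-- Call by value for lists whose entries are evaluated by `force`. -/
def forceList {α γ : Type*} (force : α → (α → γ) → γ) : List α → (List α → γ) → γ
  | [], k => k []
  | a :: l, k => force a fun a' ↦ forceList force l fun l' ↦ k (a' :: l')

theorem strictly_eq {γ : Type*} (n : ℕ) (k : ℕ → γ) : strictly n k = k n := by
  cases n <;> rfl

theorem forceList_eq {α γ : Type*} {force : α → (α → γ) → γ} (h : ∀ a k, force a k = k a)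
    (l : List α) (k : List α → γ) : forceList force l k = k l := by
  induction l generalizing k with
  | nil => rfl
  | cons a l ih => rw [forceList, h, ih]

end StrictEvaluation

/-- A list of ternary vectors of the same length, stored coordinatewise: `size` is the number of
vectors, `coords` packs the values of each coordinate into lanes, and all lanes of `ones` are one.
-/
structure PackedVectors where
  size : ℕ
  ones : ℕ
  coords : List ℕ

namespace PackedVectors

variable {n m : ℕ}

/-- The packed form of a list of vectors. -/
def ofList (l : List (Fin n → ZMod 3)) : PackedVectors :=
  ⟨l.length, pack l 1, List.ofFn fun i ↦ pack l fun u ↦ (u i).val⟩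

/-- Call by value for packed vectors. -/
def force {γ : Type*} (x : PackedVectors) (k : PackedVectors → γ) : γ :=
  strictly x.size fun size ↦ strictly x.ones fun ones ↦
    forceList strictly x.coords fun coords ↦ k ⟨size, ones, coords⟩

/-- Concatenates two packed lists. -/
def append (x y : PackedVectors) : PackedVectors :=
  ⟨x.size + y.size, appendLanes x.size x.ones y.ones,
    List.zipWith (appendLanes x.size) x.coords y.coords⟩

/-- Prepends the coordinate `a` to every vector of `x`. -/
def cons (a : ZMod 3) (x : PackedVectors) : PackedVectors :=
  ⟨x.size, x.ones, a.val * x.ones :: x.coords⟩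

/-- The lanes holding coordinate `i`. -/
def coord (x : PackedVectors) (i : Fin n) : ℕ :=
  x.coords.getD i 0

/-- The lanes holding the code weights of the vectors of `x`. -/
def codeWeights (A : Matrix (Fin n) (Fin m) (ZMod 3)) (x : PackedVectors) : ℕ :=
  ∑ i : Fin n, nonzeroLanes x.ones (x.coord i) +
    ∑ j, nonzeroLanes x.ones (∑ i, (A i j).val * x.coord i)

theorem force_eq {γ : Type*} (x : PackedVectors) (k : PackedVectors → γ) : x.force k = k x := by
  simp only [force, strictly_eq, forceList_eq strictly_eq]

theorem ofList_append (l l' : List (Fin n → ZMod 3)) :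
    ofList (l ++ l') = (ofList l).append (ofList l') := by
  simp only [ofList, append, List.length_append, pack_append, mk.injEq, true_and]
  apply List.ext_getElem <;> simp

theorem ofList_map_vecCons (a : ZMod 3) (l : List (Fin n → ZMod 3)) :
    ofList (l.map (vecCons a)) = (ofList l).cons a := by
  simp only [ofList, cons, List.length_map, pack_map, List.ofFn_succ, ← pack_const]
  rfl

theorem coord_ofList (l : List (Fin n → ZMod 3)) (i : Fin n) :
    (ofList l).coord i = pack l fun u ↦ (u i).val := by
  simp [coord, ofList]

theorem sum_nonzeroLanes_pack {α : Type*} {l : List α} {f : Fin m → α → ℕ}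
    (hf : ∀ j, ∀ a ∈ l, f j a < 192) :
    ∑ j, nonzeroLanes (pack l 1) (pack l (f j)) =
      pack l fun a ↦ hammingNorm fun j ↦ (f j a : ZMod 3) := by
  simp only [nonzeroLanes_pack (hf _), hammingNorm, Finset.card_filter, pack_sum]

theorem codeWeights_ofList (hn : n < 48) (A : Matrix (Fin n) (Fin m) (ZMod 3))
    (l : List (Fin n → ZMod 3)) : (ofList l).codeWeights A = pack l (codeWeight A) := by
  have val_le (a : ZMod 3) : a.val ≤ 2 := Nat.le_of_lt_succ a.val_lt
  have column_le (u : Fin n → ZMod 3) (j : Fin m) : ∑ i, (A i j).val * (u i).val < 192 :=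
    calc ∑ i, (A i j).val * (u i).val ≤ ∑ _i : Fin n, 2 * 2 :=
          Finset.sum_le_sum fun i _ ↦ Nat.mul_le_mul (val_le _) (val_le _)
      _ < 192 := by
          simp only [Finset.sum_const, Finset.card_univ, Fintype.card_fin, smul_eq_mul]
          omega
  simp only [codeWeights, coord_ofList, ← pack_const_mul, ← pack_sum]
  rw [ofList, sum_nonzeroLanes_pack fun i u _ ↦ (val_le (u i)).trans_lt (by norm_num),
    sum_nonzeroLanes_pack fun j u _ ↦ column_le u j, ← pack_add]
  refine pack_congr fun u _ ↦ ?_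
  simp only [codeWeight, ZMod.natCast_val, ZMod.cast_id, Nat.cast_sum, Nat.cast_mul,
    mul_comm (A _ _)]
  rfl

end PackedVectors

section LightTable

/-- Passes from the packed lists of vectors of weight at most `t, …, 1, 0` in one dimension to those
in the next dimension. -/
def extendLight : List PackedVectors → List PackedVectors
  | x :: y :: l => (x.cons 0).append ((y.cons 1).append (y.cons 2)) :: extendLight (y :: l)
  | l => l.map (PackedVectors.cons 0)

/-- The packed lists of vectors of length `n` and weight at most `t, …, 1, 0`. -/
def packedLight (t : ℕ) : ℕ → List PackedVectors
  | 0 => List.replicate (t + 1) (.ofList [![]])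
  | n + 1 => forceList PackedVectors.force (extendLight (packedLight t n)) id

theorem extendLight_map_ofList (n t : ℕ) :
    extendLight ((List.range (t + 1)).reverse.map fun k ↦ .ofList (lightVectors n k)) =
      (List.range (t + 1)).reverse.map fun k ↦ .ofList (lightVectors (n + 1) k) := by
  induction t with
  | zero => simp [extendLight, lightVectors, PackedVectors.ofList_map_vecCons]
  | succ t ih =>
    simp only [List.range_succ (n := t), List.range_succ (n := t + 1), List.reverse_append,
      List.reverse_singleton, List.singleton_append, List.map_cons] at ih ⊢
    rw [extendLight, ih]
    simp only [lightVectors, PackedVectors.ofList_append, PackedVectors.ofList_map_vecCons]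

theorem packedLight_eq (t n : ℕ) :
    packedLight t n = (List.range (t + 1)).reverse.map fun k ↦ .ofList (lightVectors n k) := by
  induction n with
  | zero =>
    simp [packedLight, lightVectors]
  | succ n ih =>
    rw [packedLight, forceList_eq PackedVectors.force_eq, ih, extendLight_map_ofList, id]

theorem headD_packedLight (t n : ℕ) (x : PackedVectors) :
    (packedLight t n).headD x = .ofList (lightVectors n t) := by
  rw [packedLight_eq, List.range_succ]
  simp

end LightTable

section Certificate

variable {n : ℕ}

/-- The decision procedure run on the packed list of all vectors `u` of weight at most `t`. It
tests that the code weights of `A` are divisible by `3`, that only `u = 0` has code weight at most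
`2 * t`, for `A` as well as for `Aᵀ`, and that the code weight `2 * t + 1` occurs `N` times for `A`
and `Aᵀ` together. -/
def isCertified (t : ℕ) (A : Matrix (Fin n) (Fin n) (ZMod 3)) (N : ℕ) : Bool :=
  ((packedLight t n).headD ⟨0, 0, []⟩).force fun x ↦
    strictly (x.codeWeights A) fun w ↦ strictly (x.codeWeights Aᵀ) fun w' ↦
      decide (x.size < 2 ^ 16 - 1) && nonzeroLanes x.ones w == 0 &&
      countLe (2 * t) x.ones w == 1 && countLe (2 * t) x.ones w' == 1 &&
      countLe (2 * t + 1) x.ones w + countLe (2 * t + 1) x.ones w' == N + 2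

theorem countLe_codeWeight {t s : ℕ} (hn : n ≤ 32) (hs : s < 64)
    (hsize : (lightVectors n t).length < 2 ^ 16 - 1) (A : Matrix (Fin n) (Fin n) (ZMod 3)) :
    countLe s (pack (lightVectors n t) 1) (pack (lightVectors n t) (codeWeight A)) =
      Finset.card {u | codeWeight A u ≤ s ∧ hammingNorm u ≤ t} := by
  rw [countLe_pack hs hsize fun u _ ↦ (codeWeight_le A u).trans (by omega),
    card_filter_and_hammingNorm_le]

theorem three_dvd_codeWeight_of_nonzeroLanes_eq_zero {t : ℕ} (hn : n ≤ 32)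
    {A : Matrix (Fin n) (Fin n) (ZMod 3)} (h : nonzeroLanes (pack (lightVectors n t) 1)
      (pack (lightVectors n t) (codeWeight A)) = 0)
    {u : Fin n → ZMod 3} (hu : hammingNorm u ≤ t) : 3 ∣ codeWeight A u := by
  rw [nonzeroLanes_pack fun u _ ↦ (codeWeight_le A u).trans_lt (by omega)] at h
  have := eq_zero_of_pack_eq_zero h u (mem_lightVectors.mpr hu)
  rwa [ite_eq_right_iff, imp_iff_not (by norm_num), not_not, ZMod.natCast_eq_zero_iff] at this

theorem isCertified_spec {t N : ℕ} (hn : n ≤ 32) (ht : t < 32)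
    {A : Matrix (Fin n) (Fin n) (ZMod 3)} (h : isCertified t A N = true) :
    (∀ u, hammingNorm u ≤ t → 3 ∣ codeWeight A u) ∧
      Finset.card {u | codeWeight A u ≤ 2 * t ∧ hammingNorm u ≤ t} = 1 ∧
      Finset.card {u | codeWeight Aᵀ u ≤ 2 * t ∧ hammingNorm u ≤ t} = 1 ∧
      Finset.card {u | codeWeight A u ≤ 2 * t + 1 ∧ hammingNorm u ≤ t} +
        Finset.card {u | codeWeight Aᵀ u ≤ 2 * t + 1 ∧ hammingNorm u ≤ t} = N + 2 := by
  simp only [isCertified, headD_packedLight, PackedVectors.force_eq, strictly_eq,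
    PackedVectors.codeWeights_ofList (show n < 48 by omega), Bool.and_eq_true, decide_eq_true_eq,
    beq_iff_eq] at h
  obtain ⟨⟨⟨⟨hsize, hzero⟩, hmin⟩, hmin'⟩, hcount⟩ := h
  simp only [PackedVectors.ofList] at hsize hzero hmin hmin' hcount
  rw [countLe_codeWeight hn (by omega) hsize] at hmin hmin'
  rw [countLe_codeWeight hn (by omega) hsize, countLe_codeWeight hn (by omega) hsize] at hcount
  exact ⟨fun u ↦ three_dvd_codeWeight_of_nonzeroLanes_eq_zero hn hzero, hmin, hmin', hcount⟩

theorem mul_transpose_eq_neg_one_of_isCertified {t N : ℕ} (hn : n ≤ 32) (ht : 2 ≤ t) (ht' : t < 32)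
    {A : Matrix (Fin n) (Fin n) (ZMod 3)} (h : isCertified t A N = true) : A * Aᵀ = -1 :=
  mul_transpose_eq_neg_one_of_three_dvd_codeWeight fun u hu ↦
    (isCertified_spec hn ht' h).1 u (hu.trans ht)

theorem lt_codeWeight_of_isCertified {t N : ℕ} (hn : n ≤ 32) (ht : 2 ≤ t) (ht' : t < 32)
    {A : Matrix (Fin n) (Fin n) (ZMod 3)} (h : isCertified t A N = true) {u : Fin n → ZMod 3}
    (hu : u ≠ 0) : 2 * t < codeWeight A u := by
  obtain ⟨-, hmin, hmin', -⟩ := isCertified_spec hn ht' h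
  exact lt_codeWeight_of_light (mul_transpose_eq_neg_one_of_isCertified hn ht ht' h)
    (eq_zero_of_card_codeWeight_le_eq_one hmin) (eq_zero_of_card_codeWeight_le_eq_one hmin') hu

theorem card_codeWeight_eq_of_isCertified {t N : ℕ} (hn : n ≤ 32) (ht : 2 ≤ t) (ht' : t < 32)
    {A : Matrix (Fin n) (Fin n) (ZMod 3)} (h : isCertified t A N = true) :
    Finset.card {u | codeWeight A u = 2 * t + 1} = N := by
  obtain ⟨-, hmin, hmin', hcount⟩ := isCertified_spec hn ht' h
  rw [card_codeWeight_le_succ, card_codeWeight_le_succ, hmin, hmin'] at hcount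
  rw [card_codeWeight_eq_add_card_transpose (mul_transpose_eq_neg_one_of_isCertified hn ht ht' h)]
  omega

end Certificate

theorem minWeightNine_of_lt_of_A9_ne_zero {C : Submodule (ZMod 3) (Fin 36 → ZMod 3)}
    (h : ∀ x ∈ C, x ≠ 0 → 8 < hammingNorm x) (hC : A9 C ≠ 0) : MinWeightNine C := by
  obtain ⟨⟨x, hx, hx9⟩⟩ : Nonempty {x // x ∈ C ∧ hammingNorm x = 9} :=
    (Nat.card_ne_zero.mp hC).1
  refine ⟨⟨x, hx, hammingNorm_pos_iff.mp (by omega), hx9⟩, ?_⟩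
  rintro _ ⟨y, hy, hy0, rfl⟩
  exact h y hy hy0

theorem isSelfDualCode_systematicCode {A : Matrix (Fin 18) (Fin 18) (ZMod 3)}
    (hA : A * Aᵀ = -1) : IsSelfDualCode (systematicCode A) :=
  fun _ ↦ mem_systematicCode_iff_forall_dotProduct_eq_zero hA

theorem near_extremal_systematicCode_of_isCertified {A : Matrix (Fin 18) (Fin 18) (ZMod 3)}
    {N : ℕ} (hN : N ≠ 0) (h : isCertified 4 A N = true) :
    IsSelfDualCode (systematicCode A) ∧ MinWeightNine (systematicCode A) ∧
      A9 (systematicCode A) = N := by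
  have hn : 18 ≤ 32 := by norm_num
  have hA : A * Aᵀ = -1 :=
    mul_transpose_eq_neg_one_of_isCertified hn (by norm_num) (by norm_num) h
  have lt_weight : ∀ x ∈ systematicCode A, x ≠ 0 → 2 * 4 < hammingNorm x :=
    lt_hammingNorm_of_mem_systematicCode fun u hu ↦
      lt_codeWeight_of_isCertified hn (by norm_num) (by norm_num) h hu
  have card_eq : A9 (systematicCode A) = N :=
    (card_systematicCode_hammingNorm_eq A (2 * 4 + 1)).trans
      (card_codeWeight_eq_of_isCertified hn (by norm_num) (by norm_num) h)
  exact ⟨isSelfDualCode_systematicCode hA,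
    minWeightNine_of_lt_of_A9_ne_zero lt_weight (card_eq.trans_ne hN), card_eq⟩

section Certificates

/-- The matrix of size `n` whose entry `(i, j)` is the `j`-th ternary digit of the `i`-th entry of
`rows`, counted from the least significant one. -/
def ternaryMatrix (n : ℕ) (rows : List ℕ) : Matrix (Fin n) (Fin n) (ZMod 3) :=
  .of fun i j ↦ ↑(rows.getD i 0 / 3 ^ (j : ℕ))

/-- For each `β`, the rows of a matrix `A` for which `[I | A]` generates a near-extremal ternary
self-dual code of length 36 with `8 * β` codewords of weight 9. -/
def certificates : List (ℕ × List ℕ) := [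
  (9, [34044629, 140494933, 306303251, 102114205, 144068777, 44785843, 134337847, 15612735,
    46838205, 252469635, 369968735, 335084911, 23703279, 230453121, 71109837, 303958557, 213290147,
    137034695]),
  (12, [135980503, 61034537, 20521749, 159233146, 182040731, 90810391, 175146563, 138550642,
    84692127, 28230709, 374277216, 253544941, 283965444, 95009199, 77586068, 231696051, 307668393,
    147632032]),
  (13, [231891947, 308786794, 152049388, 69789830, 209368763, 240685072, 188941733, 179937609,
    152923780, 214048912, 254725519, 71350123, 247598367, 355375341, 290754333, 293854558,
    106190527, 97952005]),
  (14, [290301501, 58857957, 284103697, 180027680, 288934339, 381019899, 116713337, 256211048,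
    163841987, 343253801, 61647206, 281990427, 293940243, 224959480, 150872858, 305582625,
    229866988, 57192237]),
  (15, [58672035, 33397203, 175484665, 140094931, 99128729, 296856204, 77496842, 165922431,
    231426916, 307393158, 147339954, 55661528, 245009816, 210456050, 121347089, 348671841,
    271704529, 40803323]),
  (16, [302768492, 132933786, 12442294, 36796172, 110387059, 330098297, 221696614, 278731508,
    73899357, 61353547, 163702927, 183530658, 125857282, 376508236, 354685188, 93334957, 279474161,
    289215317]),
  (17, [96601135, 80428379, 85968210, 154627021, 120235476, 2208383, 151840271, 225097747,
    138876267, 280902013, 212726951, 347613860, 327410986, 345290046, 28447637, 57867400,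
    227630087, 300252004]),
  (18, [28000720, 82938550, 248815650, 360087886, 305422681, 140896353, 243650688, 210356816,
    344063017, 385686615, 257348074, 381687428, 272386840, 42320273, 126430109, 378227447,
    359309924, 303619508]),
  (19, [14580616, 260023817, 267621890, 356771689, 272510743, 351472485, 322731359, 5892280,
    177391344, 332214851, 78098092, 282984421, 189646202, 383805492, 340401933, 371747151,
    281249010, 69437493]),
  (20, [298920993, 221678669, 22732466, 182854258, 300246916, 12654757, 85945170, 91727222,
    1944481, 272395917, 264202505, 382224844, 53233581, 172831436, 345154435, 101601351, 371349810,
    236755872]),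
  (21, [27113339, 71832417, 364523081, 174564148, 46533910, 325041548, 115689945, 38582749,
    290103841, 95470563, 202265037, 228882258, 142245385, 130238000, 228491207, 298054573,
    299284623, 123073398]),
  (22, [331690652, 275399667, 220762419, 51889464, 155136952, 77989639, 217636689, 266021750,
    23225730, 205840740, 68613580, 257515439, 231163886, 385657270, 381600120, 370489366,
    236631065, 337157104]),
  (23, [206412400, 241324347, 115177000, 9484711, 90300686, 49232215, 216810508, 147577827,
    188940188, 184183773, 123382349, 33818303, 199672376, 101336091, 197178658, 143275238,
    180572044, 320046136]),
  (24, [33433571, 99258217, 269076891, 55072957, 53804199, 23146705, 27159247, 137032869,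
    133758009, 252410347, 366318906, 255852278, 369279139, 338958128, 333034401, 277228093,
    85009701, 226332019]),
  (25, [207137390, 233992410, 315619623, 171485722, 127037406, 381111491, 117392494, 351115329,
    277972840, 149592530, 59608983, 178826949, 109451227, 310393263, 327290071, 206497796,
    232604341, 156869525]),
  (26, [220128703, 83505058, 368570248, 39108457, 229940191, 123873229, 11250888, 10248081,
    116475585, 219167188, 54576787, 345158434, 361066373, 281882102, 202046007, 251872416,
    357601716, 234011295]),
  (27, [137430836, 230497136, 304090604, 74714474, 24911385, 224104057, 239580958, 284911367,
    79873441, 260388551, 6344358, 19033074, 171140206, 57059857, 359101151, 302482158, 126000130,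
    377980709]),
  (28, [255589381, 264894139, 273527908, 313749691, 2983171, 32614210, 201045193, 145865524,
    109582513, 149848016, 327443990, 195765806, 251050490, 319802315, 112543235, 168258746,
    218524655, 193680720]),
  (29, [171660236, 207947884, 321355891, 194008953, 232495633, 139750550, 211367204, 32554748,
    314909886, 374627725, 88155906, 179362688, 160157190, 178044496, 58591610, 92435663, 228601411,
    205360316]),
  (30, [258613348, 86552677, 333227599, 14815830, 12359987, 239152036, 8873520, 330565576,
    12252646, 190959024, 214115060, 254412233, 119309212, 357416608, 283080405, 282043889,
    352294478, 121866728]),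
  (31, [308950238, 33234533, 62263337, 152127834, 228592005, 197039983, 348740090, 234593305,
    369455747, 361205209, 92089797, 288956756, 85220392, 154377754, 386496981, 256357998,
    379868454, 364881771]),
  (32, [81833225, 163061279, 76716833, 148412843, 19836945, 25913349, 381357472, 321507293,
    116203470, 266774887, 57619429, 138851077, 252484581, 365663639, 310729262, 375866671,
    98922614, 287728082]),
  (33, [251766508, 382246169, 372960386, 211862332, 248166561, 384733134, 279561902, 64906154,
    181413512, 296297722, 315137478, 114604717, 202567704, 187457630, 248961512, 135871574,
    45460858, 24712528]),
  (34, [383526344, 386299587, 375207342, 351311032, 279623559, 64560413, 225978060, 291575846,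
    298596803, 120417262, 99886561, 360721076, 255022536, 377647848, 298937474, 121972902,
    365387996, 358103297]),
  (35, [216305963, 159884870, 343639640, 251294982, 270560984, 129426553, 10306290, 266188949,
    370441589, 129961893, 46509274, 152518729, 117914418, 348961014, 179199430, 154960771,
    22034583, 267200064]),
  (36, [66917437, 179209054, 151268828, 199689431, 211647806, 248585811, 171387689, 233981922,
    315586702, 127274020, 369035984, 381292077, 293230152, 226705914, 163494296, 103595298,
    104318766, 312955571]),
  (37, [120392630, 123028738, 211649990, 188118040, 13217513, 188847481, 224846262, 200939445,
    167981259, 387278191, 204378437, 4740081, 19374708, 79832125, 203705206, 69475895, 228579246,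
    205314021]),
  (38, [217456234, 347261701, 70904028, 281739556, 242981184, 195962347, 258218926, 381862741,
    179281258, 232382560, 320811085, 378125034, 340792879, 209226533, 13954836, 32816891,
    126339115, 292935641]),
  (39, [245422237, 40193057, 376462175, 13385596, 91919995, 310410927, 361391410, 157435029,
    72252690, 85397814, 11989687, 323662503, 368402354, 261430086, 215676209, 7309157, 287244475,
    197170101]),
  (40, [188275371, 178468506, 57065313, 147984301, 170664499, 125634433, 357145742, 297126232,
    278239827, 351203839, 117068432, 34820479, 59879961, 311260008, 103929997, 158407607, 88864487,
    266593461]),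
  (41, [261908995, 248746453, 168734252, 128289165, 237514107, 230660917, 13033840, 243678953,
    349072236, 267594219, 23100390, 59792832, 59645676, 42909905, 289344217, 208401190, 244947802,
    83223664]),
  (42, [374481263, 270436746, 348602812, 35937821, 107282753, 320786106, 7839255, 22454885,
    67364655, 201030355, 141018863, 216732001, 36168272, 108504089, 262775516, 325511540,
    201693643, 218192612]),
  (43, [155708975, 84706817, 84489423, 82166507, 53451055, 346542620, 160353165, 129483112,
    240420147, 163011779, 322991186, 368622424, 7718985, 18374004, 45614412, 132120774, 180867244,
    316975327]),
  (44, [21633947, 26645938, 295412604, 125950520, 63703476, 293881221, 102641822, 270724426,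
    298747487, 114108789, 101504401, 269903110, 57209058, 162062541, 37941691, 23008280, 226172818,
    376776687]),
  (45, [9147386, 269102301, 158006726, 185654417, 118975271, 81694016, 53550649, 340639687,
    236309430, 197853492, 229238487, 202383594, 175942708, 99122683, 79034422, 336657607, 68483556,
    151967988]),
  (46, [136169083, 325914178, 319305805, 342527299, 364303360, 47052862, 236008459, 243215416,
    245165680, 77278778, 136809770, 191046986, 294018503, 241810295, 69429782, 178738766, 37170239,
    193680720]),
  (47, [84121246, 319158080, 319091900, 247640565, 65094036, 281552978, 341424152, 347801801,
    40299565, 301806813, 69871841, 103197984, 365306821, 75016343, 293958517, 357860824, 26756002,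
    312763973]),
  (48, [222046202, 278718846, 104807418, 61316291, 183418890, 163898336, 222230615, 66163194,
    280334238, 197958142, 234070010, 261643130, 158329719, 206986109, 87568670, 10618396, 30791578,
    91312581]),
  (49, [165005174, 16238796, 170541487, 85531908, 38761238, 39277842, 31005165, 157214485,
    368208879, 367883651, 219061, 53144553, 53217099, 159651297, 5808341, 69578997, 326423909,
    258178317]),
  (50, [15513608, 12942024, 239902597, 194583858, 242202909, 386958890, 50085163, 146521569,
    282934486, 108520899, 146878894, 96328452, 291917259, 62588574, 259595407, 46572078, 174589031,
    218195079]),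
  (51, [127074486, 331784992, 284898959, 234844005, 353056385, 142217783, 331479441, 39254001,
    47759744, 164334536, 175603924, 167578797, 262765967, 115807275, 92181364, 27275065, 348651991,
    120994233]),
  (52, [202865154, 221174245, 56655864, 277165128, 169437609, 120891610, 361869936, 310238118,
    155341207, 79666014, 237935889, 213904106, 326386450, 254824728, 71301611, 377585137,
    357915164, 298905972]),
  (53, [19877131, 175640125, 322640035, 282338616, 22509492, 231265465, 82625593, 16081472,
    156701473, 377278208, 244808973, 291890466, 179181675, 319621365, 354244185, 245587869,
    154096344, 178872381]),
  (54, [159853493, 92139262, 275887803, 53352415, 159525805, 92219808, 297090529, 116961323,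
    350882512, 278337999, 59640850, 178921093, 84559828, 253679484, 374149405, 348137951,
    270103589, 36000503]),
  (55, [121509518, 215104499, 298094327, 113820968, 315439979, 151574708, 129886520, 176409365,
    240884036, 367281047, 309026798, 132782207, 184584671, 335123882, 73488149, 224916197,
    71046302, 193680720]),
  (56, [281860432, 70844566, 63168743, 154897683, 294354739, 65122653, 111913136, 298123738,
    341489048, 207227600, 280067965, 70080988, 209923371, 238091553, 82844158, 166092791, 75549560,
    272462899]),
  (57, [376242060, 217692590, 126988174, 81294511, 296488258, 296458193, 109752090, 247902236,
    30786926, 202470436, 229439388, 114338686, 7797589, 334427114, 223657404, 211764122, 81364714,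
    243976045]),
  (58, [294467711, 109092139, 206456104, 327276417, 232479995, 310551668, 375680261, 351668366,
    279633408, 64589230, 193236250, 192821160, 349029140, 245483209, 121431865, 271714273,
    40831825, 363765612]),
  (59, [127818536, 351497608, 373891049, 279712274, 97653388, 288177845, 208827843, 313437647,
    119234551, 264907709, 234324763, 104474915, 348196685, 20000168, 317888064, 109171233,
    48139903, 315612849]),
  (60, [331601508, 233267798, 340037520, 42982814, 99699558, 270440226, 385340726, 367345456,
    328258272, 198248211, 21697265, 50744321, 207854885, 251555955, 316471537, 138454863,
    206019945, 188411565]),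
  (61, [181918902, 188165305, 196094902, 222542386, 321017376, 363731401, 301954814, 243132179,
    85707229, 156114916, 278767991, 66127146, 166999382, 72749948, 150537978, 229420476, 69036921,
    202444443]),
  (62, [244707878, 185394954, 321991250, 199576790, 98510997, 291393074, 183020071, 247273322,
    282229077, 105256540, 374310274, 309702092, 54881160, 276535190, 246286914, 351978238,
    59309334, 140255469]),
  (63, [38254796, 175149896, 67599577, 202681362, 92258701, 88512770, 260754621, 27174915,
    249444602, 72016407, 215990181, 269997174, 153173606, 292245960, 355675960, 294591019,
    107437777, 317589403]),
  (64, [342307477, 252612167, 370947454, 338532825, 156849362, 84189022, 241287481, 252036356,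
    337504836, 369750004, 333877595, 227321791, 251003256, 324580422, 366650704, 198368849,
    238821232, 208747483]),
  (65, [214945387, 190512233, 137518208, 87253400, 160201811, 98085300, 261702609, 124998863,
    193599603, 198220347, 212024250, 258159897, 199830708, 212130684, 253814328, 383529393,
    66961852, 148272623]),
  (66, [127545143, 382596064, 171648649, 256944513, 383452416, 372927532, 343921936, 375516272,
    351727521, 82788688, 357717069, 27609351, 248366064, 298290547, 120010981, 360032943,
    305257853, 140912899]),
  (67, [302773251, 132946606, 12481484, 36913742, 101145679, 292172942, 303435580, 134934323,
    51087474, 17383209, 110211243, 330103019, 286842034, 85154412, 255461779, 378964120, 362582823,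
    313438932]),
  (68, [386598187, 337229598, 319367630, 182731200, 45897894, 133554996, 215128215, 252695682,
    247271038, 350095000, 197730310, 321021439, 119285380, 267084057, 13714575, 31103848,
    316655271, 183640383]),
  (69, [114526230, 100664627, 284674717, 191921963, 147843031, 39037036, 302668912, 137829909,
    113252710, 351222582, 133015015, 252103669, 11626014, 347745742, 11185694, 189281828,
    362549050, 124058258]),
  (70, [379635041, 209089279, 129089748, 252840714, 87659101, 28764354, 367706301, 43792174,
    14773071, 55816886, 53217297, 147064582, 276196329, 283976921, 13119999, 77091243, 349599925,
    2551296]),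
  (71, [320502113, 191330961, 79817745, 286500004, 43095612, 129169388, 253158122, 302804386,
    179187372, 207219655, 9595861, 28729913, 61499588, 44756354, 129486743, 166273602, 122077449,
    297418068]),
  (72, [377891272, 358813156, 301598492, 129934816, 2403644, 7210932, 21613115, 144338278,
    45633711, 136881452, 194518035, 64839345, 23263233, 69750334, 209211637, 240253788, 333380241,
    225299747]),
  (73, [15326789, 134222478, 44917487, 46273741, 15779117, 138820496, 4013462, 11509676, 33999045,
    301736965, 129839205, 100933525, 272326129, 42138867, 126415874, 378184012, 359711059,
    303760030]),
  (74, [185748535, 59134323, 212491117, 44542661, 153219062, 255683344, 292473161, 158703034,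
    63256456, 28211122, 57641024, 263801994, 37196678, 234619714, 144251827, 201420189, 308032389,
    103099604]),
  (75, [82904266, 248673433, 156774918, 358599811, 300938773, 127995024, 383945707, 376996145,
    356147459, 64066827, 150482650, 192161116, 189062860, 151982205, 179787776, 229452452,
    68545811, 205617752]),
  (76, [348805340, 40414135, 271575043, 121240948, 363722844, 316327555, 29357646, 88072938,
    263155934, 134302996, 44944812, 15158265, 233450627, 336096958, 313994274, 166611132,
    112945079, 338304527]),
  (77, [387383994, 382528044, 256634955, 368017785, 356715180, 295422660, 106701633, 320104899,
    371992510, 317195197, 336293814, 98493137, 198521304, 56239879, 115405178, 385796764,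
    226664557, 204695018]),
  (78, [224268469, 85030955, 255092138, 286447073, 378918080, 362443246, 234097019, 315402010,
    171366510, 368995603, 127211213, 381102199, 187850351, 176663463, 143101342, 42946419,
    127776377, 382799148]),
  (79, [3840975, 2835765, 65348846, 186834485, 2014587, 1378179, 182647455, 170973140, 374293909,
    352704900, 66535829, 24078107, 281384332, 217230386, 271888888, 72115503, 4429105, 1476611]),
  (80, [149453524, 310938052, 151816494, 35340754, 151465574, 346759143, 148404044, 115187018,
    122835772, 122883426, 40813787, 188756406, 120228148, 302415686, 272076012, 205668760,
    121535994, 255887748]),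
  (81, [122603031, 28811997, 86429448, 203372973, 160133778, 94030614, 189378953, 112325794,
    226078339, 295854035, 181586042, 151709587, 319298528, 81956154, 109663260, 246779794,
    251443764, 367973685]),
  (82, [142681235, 193831678, 223763093, 383300725, 277361342, 25979863, 107628110, 199357900,
    215618238, 112328412, 240664107, 334611198, 229012299, 372438081, 124146027, 299655774,
    229647846, 242132883]),
  (83, [292767782, 355846995, 292817944, 292795251, 41883904, 371920764, 262194789, 253113265,
    337193219, 236799186, 229728207, 14188141, 234329602, 241660029, 342403074, 13596229, 85262220,
    246161025]),
  (85, [37876879, 362134603, 327413177, 42413383, 237273560, 209625362, 153728933, 57777125,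
    178552319, 322251172, 21189319, 44563570, 108674102, 219218060, 312861921, 79952073, 386898561,
    200874816]),
  (90, [187490605, 175051327, 137733493, 231901827, 25779991, 77300609, 308265311, 62503429,
    149974639, 294156583, 107628773, 322886319, 194131865, 193857345, 194955425, 227192357,
    197426105, 204877509]),
  (93, [34191284, 102573852, 57550588, 307721556, 148323692, 130416712, 3809966, 11410216,
    172612400, 230570311, 138109087, 304310127, 26887091, 241983819, 338550651, 80661273,
    240850341, 335130535])]

set_option maxHeartbeats 1000000 in
-- A separate kernel call for each certificate keeps the memory consumption low.
theorem isCertified_of_mem_certificates : ∀ c ∈ certificates,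
    isCertified 4 (ternaryMatrix 18 c.2) (8 * c.1) = true := by
  simp only [certificates, List.forall_mem_cons]
  split_ands <;> decide +kernel

end Certificates

theorem exists_near_extremal_codes :
    ∀ β ∈ ({9} ∪ Finset.Icc 12 83 ∪ {85, 90, 93} : Finset ℕ),
      ∃ C : Submodule (ZMod 3) (Fin 36 → ZMod 3),
        IsSelfDualCode C ∧ MinWeightNine C ∧ A9 C = 8 * β := by
  have certificates_cover : ∀ β ∈ ({9} ∪ Finset.Icc 12 83 ∪ {85, 90, 93} : Finset ℕ),
      β ≠ 0 ∧ ∃ c ∈ certificates, c.1 = β := by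
    decide +kernel
  intro β hβ
  obtain ⟨β_ne_zero, c, hc, rfl⟩ := certificates_cover β hβ
  exact ⟨systematicCode (ternaryMatrix 18 c.2), near_extremal_systematicCode_of_isCertified
    (mul_ne_zero (by norm_num) β_ne_zero) (isCertified_of_mem_certificates c hc)⟩
end

section
/- The explicit 36×36 matrix A over ZMod 3 given in the Appendix (second matrix, with rows such as 1 1 1 1 1 1 1 0 0 0 0 0 1 1 1 1 1 1 1 1 0 0 0 0 0 0 0 0 0 0 0 0 0 0 0 0, reading each block as the set of column indices with entry 1) is the incidence matrix of a symmetric 2-(36,15,6) design: every row has exactly 15 ones and every two distinct columns share a one in exactly 6 common rows; moreover the F₃-row span of A is a self-dual ternary code of length 36 with minimum weight 9 having exactly 120 codewords of weight 9. -/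
/-- The rows of the incidence matrix from the Appendix of the paper. -/
def rows120 : List (List ℕ) :=
  [[1, 1, 1, 1, 1, 1, 1, 0, 0, 0, 0, 0, 1, 1, 1, 1, 1, 1, 1, 1, 0, 0, 0, 0, 0, 0, 0, 0, 0, 0, 0, 0, 0, 0, 0, 0],
   [1, 1, 1, 1, 0, 0, 0, 1, 1, 1, 0, 0, 1, 1, 0, 0, 0, 0, 0, 0, 1, 1, 1, 1, 1, 1, 0, 0, 0, 0, 0, 0, 0, 0, 0, 0],
   [1, 1, 1, 0, 1, 0, 0, 1, 0, 0, 1, 1, 1, 1, 0, 0, 0, 0, 0, 0, 0, 0, 0, 0, 0, 0, 1, 1, 1, 1, 1, 1, 0, 0, 0, 0],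
   [1, 1, 1, 0, 0, 0, 1, 0, 0, 0, 0, 0, 0, 0, 1, 0, 0, 0, 1, 0, 1, 0, 1, 0, 1, 0, 1, 0, 1, 0, 1, 0, 1, 0, 1, 1],
   [1, 1, 1, 0, 0, 0, 1, 0, 0, 0, 0, 0, 0, 0, 0, 1, 0, 0, 0, 1, 0, 1, 0, 1, 0, 1, 0, 1, 0, 1, 0, 1, 0, 1, 1, 1],
   [1, 1, 0, 1, 0, 1, 0, 0, 1, 0, 1, 1, 0, 0, 1, 1, 0, 0, 0, 0, 1, 1, 0, 0, 0, 0, 1, 1, 0, 0, 0, 0, 1, 1, 0, 0],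
   [1, 0, 1, 0, 1, 1, 0, 0, 1, 1, 1, 0, 0, 0, 0, 0, 1, 1, 0, 0, 1, 1, 0, 0, 0, 0, 0, 0, 1, 1, 0, 0, 0, 0, 1, 1],
   [1, 0, 0, 1, 1, 1, 0, 1, 0, 1, 0, 1, 0, 0, 1, 1, 0, 0, 0, 0, 0, 0, 1, 1, 0, 0, 0, 0, 0, 0, 1, 1, 0, 0, 1, 1],
   [1, 0, 0, 1, 0, 1, 0, 0, 0, 0, 1, 0, 1, 0, 0, 0, 1, 0, 1, 0, 0, 0, 1, 0, 1, 1, 0, 1, 0, 1, 1, 0, 0, 1, 1, 0],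
   [1, 0, 0, 1, 0, 1, 0, 0, 0, 0, 1, 0, 0, 1, 0, 0, 0, 1, 0, 1, 0, 0, 0, 1, 1, 1, 1, 0, 1, 0, 0, 1, 1, 0, 0, 1],
   [1, 0, 0, 0, 1, 0, 0, 1, 1, 0, 0, 0, 0, 0, 1, 0, 0, 1, 1, 1, 0, 1, 1, 0, 1, 0, 0, 1, 1, 0, 0, 1, 0, 1, 0, 0],
   [1, 0, 0, 0, 1, 0, 0, 1, 1, 0, 0, 0, 0, 0, 0, 1, 1, 0, 1, 1, 1, 0, 0, 1, 0, 1, 1, 0, 0, 1, 1, 0, 1, 0, 0, 0],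
   [1, 0, 0, 0, 0, 0, 1, 1, 1, 1, 1, 1, 1, 1, 0, 0, 0, 0, 1, 1, 0, 0, 0, 0, 0, 0, 0, 0, 0, 0, 0, 0, 1, 1, 1, 1],
   [1, 0, 0, 0, 0, 0, 1, 0, 0, 1, 0, 1, 1, 0, 0, 1, 1, 1, 0, 0, 1, 0, 1, 0, 0, 1, 0, 1, 1, 0, 0, 1, 1, 0, 0, 0],
   [1, 0, 0, 0, 0, 0, 1, 0, 0, 1, 0, 1, 0, 1, 1, 0, 1, 1, 0, 0, 0, 1, 0, 1, 1, 0, 1, 0, 0, 1, 1, 0, 0, 1, 0, 0],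
   [0, 1, 1, 0, 0, 1, 1, 1, 1, 0, 1, 0, 0, 0, 0, 0, 1, 1, 0, 0, 0, 0, 1, 1, 0, 0, 0, 0, 0, 0, 1, 1, 1, 1, 0, 0],
   [0, 1, 0, 1, 1, 0, 1, 1, 1, 0, 0, 1, 0, 0, 0, 0, 1, 1, 0, 0, 0, 0, 0, 0, 1, 1, 1, 1, 0, 0, 0, 0, 0, 0, 1, 1],
   [0, 1, 0, 1, 1, 0, 0, 0, 0, 1, 0, 0, 1, 0, 0, 0, 1, 0, 1, 0, 0, 1, 0, 1, 0, 0, 1, 0, 1, 0, 0, 1, 1, 1, 1, 0],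
   [0, 1, 0, 1, 1, 0, 0, 0, 0, 1, 0, 0, 0, 1, 0, 0, 0, 1, 0, 1, 1, 0, 1, 0, 0, 0, 0, 1, 0, 1, 1, 0, 1, 1, 0, 1],
   [0, 1, 0, 0, 1, 1, 1, 0, 0, 1, 1, 1, 0, 0, 0, 0, 0, 0, 1, 1, 1, 1, 0, 0, 1, 1, 0, 0, 0, 0, 1, 1, 0, 0, 0, 0],
   [0, 1, 0, 0, 0, 1, 0, 1, 0, 0, 0, 1, 1, 0, 0, 1, 0, 1, 1, 0, 1, 0, 0, 1, 1, 0, 0, 0, 1, 1, 0, 0, 0, 1, 0, 1],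
   [0, 1, 0, 0, 0, 1, 0, 1, 0, 0, 0, 1, 0, 1, 1, 0, 1, 0, 0, 1, 0, 1, 1, 0, 0, 1, 0, 0, 1, 1, 0, 0, 1, 0, 1, 0],
   [0, 1, 0, 0, 0, 0, 0, 0, 1, 1, 1, 0, 1, 0, 1, 1, 1, 0, 0, 1, 0, 0, 1, 0, 1, 0, 1, 0, 0, 1, 0, 1, 0, 0, 0, 1],
   [0, 1, 0, 0, 0, 0, 0, 0, 1, 1, 1, 0, 0, 1, 1, 1, 0, 1, 1, 0, 0, 0, 0, 1, 0, 1, 0, 1, 1, 0, 1, 0, 0, 0, 1, 0],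
   [0, 0, 1, 1, 1, 0, 1, 1, 0, 1, 1, 0, 0, 0, 1, 1, 0, 0, 0, 0, 0, 0, 0, 0, 1, 1, 0, 0, 1, 1, 0, 0, 1, 1, 0, 0],
   [0, 0, 1, 1, 0, 1, 1, 0, 1, 1, 0, 1, 0, 0, 0, 0, 0, 0, 1, 1, 0, 0, 1, 1, 0, 0, 1, 1, 1, 1, 0, 0, 0, 0, 0, 0],
   [0, 0, 1, 1, 0, 0, 0, 0, 1, 0, 0, 1, 1, 0, 1, 0, 0, 1, 1, 0, 0, 1, 0, 0, 0, 1, 0, 0, 0, 1, 1, 1, 1, 0, 0, 1],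
   [0, 0, 1, 1, 0, 0, 0, 0, 1, 0, 0, 1, 0, 1, 0, 1, 1, 0, 0, 1, 1, 0, 0, 0, 1, 0, 0, 0, 1, 0, 1, 1, 0, 1, 1, 0],
   [0, 0, 1, 0, 1, 0, 0, 0, 0, 0, 1, 1, 1, 0, 1, 0, 0, 1, 0, 1, 1, 0, 1, 1, 0, 1, 1, 0, 0, 0, 0, 0, 0, 1, 1, 0],
   [0, 0, 1, 0, 1, 0, 0, 0, 0, 0, 1, 1, 0, 1, 0, 1, 1, 0, 1, 0, 0, 1, 1, 1, 1, 0, 0, 1, 0, 0, 0, 0, 1, 0, 0, 1],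
   [0, 0, 1, 0, 0, 1, 0, 1, 0, 1, 0, 0, 1, 0, 0, 1, 0, 1, 0, 1, 0, 1, 0, 0, 1, 0, 1, 1, 0, 0, 1, 0, 1, 0, 1, 0],
   [0, 0, 1, 0, 0, 1, 0, 1, 0, 1, 0, 0, 0, 1, 1, 0, 1, 0, 1, 0, 1, 0, 0, 0, 0, 1, 1, 1, 0, 0, 0, 1, 0, 1, 0, 1],
   [0, 0, 0, 1, 0, 0, 1, 1, 0, 0, 1, 0, 1, 0, 1, 0, 1, 0, 0, 1, 1, 1, 0, 1, 0, 0, 0, 1, 1, 0, 1, 0, 0, 0, 0, 1],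
   [0, 0, 0, 1, 0, 0, 1, 1, 0, 0, 1, 0, 0, 1, 0, 1, 0, 1, 1, 0, 1, 1, 1, 0, 0, 0, 1, 0, 0, 1, 0, 1, 0, 0, 1, 0],
   [0, 0, 0, 0, 1, 1, 1, 0, 1, 0, 0, 0, 1, 1, 1, 0, 0, 0, 0, 0, 1, 0, 0, 1, 1, 0, 0, 1, 0, 1, 0, 1, 1, 0, 1, 0],
   [0, 0, 0, 0, 1, 1, 1, 0, 1, 0, 0, 0, 1, 1, 0, 1, 0, 0, 0, 0, 0, 1, 1, 0, 0, 1, 1, 0, 1, 0, 1, 0, 0, 1, 0, 1]]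

/-- The incidence matrix `A` from the Appendix, as a matrix over `ZMod 3`. -/
def A120 : Matrix (Fin 36) (Fin 36) (ZMod 3) :=
  fun i j => (((rows120.getD i []).getD j 0 : ℕ) : ZMod 3)

/-- The `F₃`-row span of the matrix `A120`. -/
def C120 : Submodule (ZMod 3) (Fin 36 → ZMod 3) :=
  Submodule.span (ZMod 3) (Set.range fun i => A120 i)


/-!
Put the even columns first. The minor of `A` in the even rows and even columns is invertible, so
`C` is the systematic code `{(m, m M)}` for an `18 × 18` matrix `M`, and it turns out that
`M Mᵀ = -1`. Such a code is self-dual. Since `a² = 1` for nonzero `a` in `F₃`, self-orthogonality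
makes all weights divisible by 3, so only the weights 3, 6 and 9 have to be examined.

The odd columns form an information set as well, with redundancy matrix `-Mᵀ`. A word of weight
`t + s + 1` therefore either comes from a message of weight at most `t` under `M`, or from one of
weight at most `s` under `-Mᵀ`, but not both. For `t, s ≤ 4` there are few enough such messages to
count them by evaluation: none for the weights 3 and 6, and 62 + 58 for the weight 9.
-/

namespace TernaryCode

open Matrix Finset

section Weight

variable {ι : Type*} [Fintype ι]

theorem natCast_hammingNorm (x : ι → ZMod 3) : (hammingNorm x : ZMod 3) = x ⬝ᵥ x := by
  have mul_self_eq_ite : ∀ a : ZMod 3, a * a = if a ≠ 0 then 1 else 0 := by decide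
  simp only [dotProduct, mul_self_eq_ite, hammingNorm, sum_boole]

theorem three_dvd_hammingNorm {x : ι → ZMod 3} (hx : x ⬝ᵥ x = 0) : 3 ∣ hammingNorm x := by
  rwa [← ZMod.natCast_eq_zero_iff, natCast_hammingNorm]

theorem hammingNorm_vecCons {R : Type*} [Zero R] [DecidableEq R] {n : ℕ} (a : R) (m : Fin n → R) :
    hammingNorm (vecCons a m) = hammingNorm m + if a = 0 then 0 else 1 := by
  simp only [hammingNorm, Fin.card_filter_univ_succ, cons_val_zero, cons_val_succ, ite_not]
  split <;> rfl

variable {κ n R : Type*} [Fintype κ] [Fintype n] (e : ι ⊕ κ ≃ n)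

theorem hammingNorm_eq_add_of_equiv [Zero R] [DecidableEq R] (x : n → R) :
    hammingNorm x = hammingNorm (x ∘ e ∘ Sum.inl) + hammingNorm (x ∘ e ∘ Sum.inr) := by
  simp only [hammingNorm, card_filter, ← e.sum_comp, Fintype.sum_sum_type, Function.comp_apply]

theorem dotProduct_eq_add_of_equiv [NonUnitalNonAssocSemiring R] (x y : n → R) :
    x ⬝ᵥ y = (x ∘ e ∘ Sum.inl) ⬝ᵥ (y ∘ e ∘ Sum.inl) +
      (x ∘ e ∘ Sum.inr) ⬝ᵥ (y ∘ e ∘ Sum.inr) := by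
  simp only [dotProduct, ← e.sum_comp, Fintype.sum_sum_type, Function.comp_apply]

end Weight

section SystematicCode

variable {ι κ n R : Type*} [Fintype ι]

/-- The systematic linear code with redundancy matrix `M`: the coordinates indexed by `ι` carry a
free message `m`, and those indexed by `κ` carry `m ᵥ* M`. The bijection `e` says which coordinates
are which. -/
def systematicCode [CommSemiring R] (e : ι ⊕ κ ≃ n) (M : Matrix ι κ R) : Submodule R (n → R) :=
  LinearMap.eqLocus (M.vecMulLinear ∘ₗ LinearMap.funLeft R R (e ∘ Sum.inl))
    (LinearMap.funLeft R R (e ∘ Sum.inr))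

/-- The word of `systematicCode e M` that carries the message `m`. -/
def encode [CommSemiring R] (e : ι ⊕ κ ≃ n) (M : Matrix ι κ R) (m : ι → R) : n → R :=
  Sum.elim m (m ᵥ* M) ∘ e.symm

section CommSemiring

variable [CommSemiring R] {e : ι ⊕ κ ≃ n} {M : Matrix ι κ R}

theorem mem_systematicCode {x : n → R} :
    x ∈ systematicCode e M ↔ (x ∘ e ∘ Sum.inl) ᵥ* M = x ∘ e ∘ Sum.inr :=
  Iff.rfl

theorem encode_comp_inl (m : ι → R) : encode e M m ∘ e ∘ Sum.inl = m := by
  ext; simp [encode]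

theorem encode_comp_inr (m : ι → R) : encode e M m ∘ e ∘ Sum.inr = m ᵥ* M := by
  ext; simp [encode]

theorem encode_mem (m : ι → R) : encode e M m ∈ systematicCode e M := by
  rw [mem_systematicCode, encode_comp_inl, encode_comp_inr]

theorem encode_injective : Function.Injective (encode e M) :=
  Function.LeftInverse.injective (g := (· ∘ e ∘ Sum.inl)) encode_comp_inl

theorem encode_of_mem {x : n → R} (hx : x ∈ systematicCode e M) :
    encode e M (x ∘ e ∘ Sum.inl) = x := by
  rw [encode, mem_systematicCode.mp hx, ← Function.comp_assoc, ← Function.comp_assoc,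
    Sum.elim_comp_inl_inr, Function.comp_assoc, e.self_comp_symm, Function.comp_id]

theorem eq_of_mem_of_comp_inl_eq {x y : n → R} (hx : x ∈ systematicCode e M)
    (hy : y ∈ systematicCode e M) (h : x ∘ e ∘ Sum.inl = y ∘ e ∘ Sum.inl) : x = y := by
  rw [← encode_of_mem hx, h, encode_of_mem hy]

theorem span_rows_eq_systematicCode [DecidableEq ι] {μ ν : Type*} [Fintype ν] {A : Matrix μ n R}
    (hAM : A.submatrix id (e ∘ Sum.inl) * M = A.submatrix id (e ∘ Sum.inr)) (r : ν → μ)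
    {U : Matrix ι ν R} (hU : U * A.submatrix r (e ∘ Sum.inl) = 1) :
    Submodule.span R (Set.range A.row) = systematicCode e M := by
  have row_mem (i : μ) : A.row i ∈ systematicCode e M := congrFun hAM i
  refine le_antisymm (Submodule.span_le.mpr (Set.range_subset_iff.mpr row_mem)) fun x hx => ?_
  let c := (x ∘ e ∘ Sum.inl) ᵥ* U
  have comb_mem {S : Submodule R (n → R)} (hS : ∀ i, A.row i ∈ S) :
      c ᵥ* A.submatrix r id ∈ S := by
    rw [vecMul_eq_sum]
    exact S.sum_mem fun i _ => S.smul_mem _ (hS (r i))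
  suffices x = c ᵥ* A.submatrix r id from
    this ▸ comb_mem fun i => Submodule.subset_span (Set.mem_range_self i)
  refine eq_of_mem_of_comp_inl_eq hx (comb_mem row_mem) ?_
  calc x ∘ e ∘ Sum.inl = (x ∘ e ∘ Sum.inl) ᵥ* (U * A.submatrix r (e ∘ Sum.inl)) := by
        rw [hU, vecMul_one]
    _ = c ᵥ* A.submatrix r (e ∘ Sum.inl) := (vecMul_vecMul _ _ _).symm

end CommSemiring

section SelfDual

variable [CommRing R] [DecidableEq ι] {M : Matrix ι ι R}

theorem transpose_mul_self_of_mul_transpose (hM : M * Mᵀ = -1) : Mᵀ * M = -1 := by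
  rw [← neg_eq_iff_eq_neg, ← neg_mul, mul_eq_one_comm, mul_neg, hM, neg_neg]

theorem systematicCode_eq_swap (e : ι ⊕ ι ≃ n) (hM : M * Mᵀ = -1) :
    systematicCode e M = systematicCode ((Equiv.sumComm ι ι).trans e) (-Mᵀ) := by
  ext x
  have hM' := transpose_mul_self_of_mul_transpose hM
  rw [mem_systematicCode, mem_systematicCode]
  change _ ↔ (x ∘ e ∘ Sum.inr) ᵥ* (-Mᵀ) = x ∘ e ∘ Sum.inl
  constructor <;> intro h <;> rw [← h, vecMul_vecMul]
  · rw [mul_neg, hM, neg_neg, vecMul_one]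
  · rw [neg_mul, hM', neg_neg, vecMul_one]

theorem mem_systematicCode_iff_forall_dotProduct [Fintype n] {e : ι ⊕ ι ≃ n} (hM : M * Mᵀ = -1)
    {x : n → R} :
    x ∈ systematicCode e M ↔ ∀ y ∈ systematicCode e M, x ⬝ᵥ y = 0 := by
  constructor
  · intro hx y hy
    rw [dotProduct_eq_add_of_equiv e, ← mem_systematicCode.mp hx, ← mem_systematicCode.mp hy,
      ← mulVec_transpose M (y ∘ _), ← dotProduct_mulVec, mulVec_mulVec, hM, neg_mulVec, one_mulVec,
      dotProduct_neg, add_neg_cancel]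
  · intro hx
    rw [systematicCode_eq_swap e hM, mem_systematicCode]
    change (x ∘ e ∘ Sum.inr) ᵥ* (-Mᵀ) = x ∘ e ∘ Sum.inl
    refine dotProduct_eq _ _ fun m => ?_
    have h := hx _ (encode_mem m)
    rw [dotProduct_eq_add_of_equiv e, encode_comp_inl, encode_comp_inr, ← mulVec_transpose,
      dotProduct_mulVec] at h
    rw [vecMul_neg, neg_dotProduct, neg_eq_iff_add_eq_zero, add_comm, h]

end SelfDual

end SystematicCode

section Counting

variable {ι κ n R : Type*} [Fintype ι] [Fintype κ] [DecidableEq ι] [CommSemiring R]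
  [Fintype R] [DecidableEq R]

/-- The messages of weight at most `t` that the systematic code with redundancy matrix `M` encodes
as words of weight `w`. -/
def lightMessages (M : Matrix ι κ R) (t w : ℕ) : Finset (ι → R) :=
  {m | hammingNorm m ≤ t ∧ hammingNorm m + hammingNorm (m ᵥ* M) = w}

theorem image_encode_lightMessages [Fintype n] (e : ι ⊕ κ ≃ n) (M : Matrix ι κ R) (t w : ℕ) :
    encode e M '' lightMessages M t w =
      {x | (x ∈ systematicCode e M ∧ hammingNorm x = w) ∧ hammingNorm (x ∘ e ∘ Sum.inl) ≤ t} := by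
  have weight_encode (m : ι → R) :
      hammingNorm (encode e M m) = hammingNorm m + hammingNorm (m ᵥ* M) := by
    rw [hammingNorm_eq_add_of_equiv e, encode_comp_inl, encode_comp_inr]
  ext x
  constructor
  · rintro ⟨m, hm, rfl⟩
    obtain ⟨light, weight⟩ := mem_filter_univ _ |>.mp hm
    exact ⟨⟨encode_mem m, (weight_encode m).trans weight⟩, by rwa [encode_comp_inl]⟩
  · rintro ⟨⟨hx, weight⟩, light⟩
    refine ⟨_, mem_filter_univ _ |>.mpr ⟨light, ?_⟩, encode_of_mem hx⟩
    rw [← weight_encode, encode_of_mem hx, weight]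

/-- The messages of weight at most `t` that account for the weight `w` when the redundant part
starts from `v` instead of 0 and a weight of `k` has been spent already: the state of a search that
has decided on the coefficients of some rows. -/
def lightMessagesFrom (M : Matrix ι κ R) (t w k : ℕ) (v : κ → R) : Finset (ι → R) :=
  {m | hammingNorm m ≤ t ∧ k + hammingNorm m + hammingNorm (v + m ᵥ* M) = w}

theorem lightMessages_eq_lightMessagesFrom (M : Matrix ι κ R) (t w : ℕ) :
    lightMessages M t w = lightMessagesFrom M t w 0 0 := by
  simp only [lightMessages, lightMessagesFrom, zero_add]

theorem card_lightMessagesFrom_of_forall_eq_zero {t : ℕ}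
    (eq_zero : ∀ m : ι → R, hammingNorm m ≤ t → m = 0)
    (M : Matrix ι κ R) (w k : ℕ) (v : κ → R) :
    #(lightMessagesFrom M t w k v) = if k + hammingNorm v = w then 1 else 0 := by
  have pred_iff (m : ι → R) :
      hammingNorm m ≤ t ∧ k + hammingNorm m + hammingNorm (v + m ᵥ* M) = w ↔
        k + hammingNorm v = w ∧ m = 0 := by
    constructor
    · rintro ⟨light, weight⟩
      obtain rfl := eq_zero m light
      simpa using weight
    · rintro ⟨weight, rfl⟩
      simpa using weight
  by_cases h : k + hammingNorm v = w <;> simp [lightMessagesFrom, pred_iff, h, filter_eq']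

end Counting

theorem ncard_weight_systematicCode {ι n R : Type*} [Fintype ι] [DecidableEq ι] [Fintype n]
    [CommRing R] [Fintype R] [DecidableEq R] (e : ι ⊕ ι ≃ n) {M : Matrix ι ι R}
    (hM : M * Mᵀ = -1) (t s : ℕ) :
    {x | x ∈ systematicCode e M ∧ hammingNorm x = t + s + 1}.ncard =
      #(lightMessages M t (t + s + 1)) + #(lightMessages (-Mᵀ) s (t + s + 1)) := by
  let words := {x | x ∈ systematicCode e M ∧ hammingNorm x = t + s + 1}
  let e' := (Equiv.sumComm ι ι).trans e
  have left_light : words ∩ {x | hammingNorm (x ∘ e ∘ Sum.inl) ≤ t} =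
      encode e M '' lightMessages M t (t + s + 1) :=
    (image_encode_lightMessages e M t _).symm
  have left_heavy : words \ {x | hammingNorm (x ∘ e ∘ Sum.inl) ≤ t} =
      encode e' (-Mᵀ) '' lightMessages (-Mᵀ) s (t + s + 1) := by
    rw [image_encode_lightMessages, ← systematicCode_eq_swap e hM]
    ext x
    refine and_congr_right fun hx => ?_
    change ¬ hammingNorm (x ∘ e ∘ Sum.inl) ≤ t ↔ hammingNorm (x ∘ e ∘ Sum.inr) ≤ s
    have weight_eq := hx.2
    rw [hammingNorm_eq_add_of_equiv e] at weight_eq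
    omega
  rw [← Set.ncard_inter_add_ncard_sdiff_eq_ncard words _ (Set.toFinite _), left_light, left_heavy,
    Set.ncard_image_of_injective _ encode_injective,
    Set.ncard_image_of_injective _ encode_injective,
    Set.ncard_coe_finset, Set.ncard_coe_finset]

section Recursion

variable {κ : Type*} [Fintype κ] {n : ℕ}

theorem card_filter_vecCons (p : (Fin (n + 1) → ZMod 3) → Prop) [DecidablePred p] :
    #{m | p m} = #{m | p (vecCons 0 m)} + #{m | p (vecCons 1 m)} + #{m | p (vecCons (-1) m)} := by
  simp only [card_filter]
  rw [← (Fin.consEquiv fun _ => ZMod 3).sum_comp, Fintype.sum_prod_type]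
  exact Fin.sum_univ_three _

theorem card_lightMessagesFrom_succ (rows : Matrix (Fin (n + 1)) κ (ZMod 3)) (t w k : ℕ)
    (v : κ → ZMod 3) :
    #(lightMessagesFrom rows (t + 1) w k v) =
      #(lightMessagesFrom (vecTail rows) (t + 1) w k v) +
        #(lightMessagesFrom (vecTail rows) t w (k + 1) (v + rows 0)) +
        #(lightMessagesFrom (vecTail rows) t w (k + 1) (v + -rows 0)) := by
  have vecCons_vecMul (a : ZMod 3) (m : Fin n → ZMod 3) :
      v + vecCons a m ᵥ* rows = v + a • rows 0 + m ᵥ* vecTail rows := by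
    rw [add_assoc]
    exact congrArg (v + ·) (cons_vecMul a m rows)
  have skip_row (m : Fin n → ZMod 3) :
      (hammingNorm (vecCons 0 m) ≤ t + 1 ∧
        k + hammingNorm (vecCons 0 m) + hammingNorm (v + vecCons 0 m ᵥ* rows) = w) ↔
      hammingNorm m ≤ t + 1 ∧ k + hammingNorm m + hammingNorm (v + m ᵥ* vecTail rows) = w := by
    rw [hammingNorm_vecCons, if_pos rfl, vecCons_vecMul, zero_smul, add_zero, add_zero]
  have use_row (a : ZMod 3) (ha : a ≠ 0) (m : Fin n → ZMod 3) :
      (hammingNorm (vecCons a m) ≤ t + 1 ∧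
        k + hammingNorm (vecCons a m) + hammingNorm (v + vecCons a m ᵥ* rows) = w) ↔
      hammingNorm m ≤ t ∧
        k + 1 + hammingNorm m + hammingNorm (v + a • rows 0 + m ᵥ* vecTail rows) = w := by
    rw [hammingNorm_vecCons, if_neg ha, vecCons_vecMul]
    omega
  simp only [lightMessagesFrom, card_filter_vecCons, skip_row, use_row 1 (by decide),
    use_row (-1) (by decide), one_smul, neg_smul]

end Recursion

section Packing

/-- The number whose base-64 digits are the bits `f i`. Since `64 ≡ 1 [MOD 63]`, reduction modulo 63
counts the ones as soon as there are at most 62 bits. -/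
def packBits : (n : ℕ) → (Fin n → Bool) → ℕ
  | 0, _ => 0
  | n + 1, f => Nat.bit (f 0) (packBits n (Fin.tail f) <<< 5)

theorem packBits_or : ∀ {n : ℕ} (f g : Fin n → Bool),
    packBits n (fun i => f i || g i) = packBits n f ||| packBits n g
  | 0, _, _ => (Nat.or_zero 0).symm
  | n + 1, f, g => by
    simp only [packBits, Nat.lor_bit, ← Nat.shiftLeft_or_distrib, ← packBits_or]
    rfl

theorem packBits_xor : ∀ {n : ℕ} (f g : Fin n → Bool),
    packBits n (fun i => f i ^^ g i) = packBits n f ^^^ packBits n g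
  | 0, _, _ => (Nat.xor_zero 0).symm
  | n + 1, f, g => by
    simp only [packBits, Nat.xor_bit, ← Nat.shiftLeft_xor_distrib, ← packBits_xor]
    rfl

theorem packBits_modEq_card : ∀ {n : ℕ} (f : Fin n → Bool), packBits n f ≡ #{i | f i} [MOD 63]
  | 0, _ => rfl
  | n + 1, f => by
    have ih : packBits n (Fin.tail f) ≡ #{i | f (Fin.succ i)} [MOD 63] := packBits_modEq_card _
    rw [Fin.card_filter_univ_succ', packBits, Nat.bit_val, Nat.shiftLeft_eq]
    calc 2 * (packBits n (Fin.tail f) * 2 ^ 5) + (f 0).toNat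
        = (f 0).toNat + packBits n (Fin.tail f) + 63 * packBits n (Fin.tail f) := by ring
      _ ≡ (f 0).toNat + packBits n (Fin.tail f) [MOD 63] := by simp [Nat.ModEq]
      _ ≡ (if f 0 then 1 else 0) + #{i | f (Fin.succ i)} [MOD 63] := by
        rw [Bool.toNat, Bool.cond_eq_ite]
        exact ih.add_left _

/-- A ternary word stored as two packed bit vectors: the positions of its ones and of its twos. -/
structure PackedWord where
  ones : ℕ
  twos : ℕ

namespace PackedWord

/-- The packed form of the ternary word `v`. -/
def pack {n : ℕ} (v : Fin n → ZMod 3) : PackedWord :=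
  ⟨packBits n fun i => decide (v i = 1), packBits n fun i => decide (v i = 2)⟩

/-- Negation of ternary words in packed form. -/
def neg (x : PackedWord) : PackedWord :=
  ⟨x.twos, x.ones⟩

/-- Addition of ternary words in packed form, by the bit-sliced addition of Boothby and Bradshaw. -/
def add (x y : PackedWord) : PackedWord :=
  let t := (x.ones ||| y.twos) ^^^ (x.twos ||| y.ones)
  ⟨(x.twos ||| y.twos) ^^^ t, (x.ones ||| y.ones) ^^^ t⟩

/-- The Hamming weight of a ternary word in packed form, correct up to length 62. -/
def weight (x : PackedWord) : ℕ :=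
  (x.ones ||| x.twos) % 63

variable {n : ℕ}

theorem pack_neg (v : Fin n → ZMod 3) : pack (-v) = (pack v).neg := by
  have neg_eq_one : ∀ a : ZMod 3, -a = 1 ↔ a = 2 := by decide
  have neg_eq_two : ∀ a : ZMod 3, -a = 2 ↔ a = 1 := by decide
  simp only [pack, neg, Pi.neg_apply, neg_eq_one, neg_eq_two]

theorem pack_add (u v : Fin n → ZMod 3) : pack (u + v) = (pack u).add (pack v) := by
  have add_eq_one : ∀ a b : ZMod 3, decide (a + b = 1) =
      ((decide (a = 2) || decide (b = 2)) ^^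
        ((decide (a = 1) || decide (b = 2)) ^^ (decide (a = 2) || decide (b = 1)))) := by decide
  have add_eq_two : ∀ a b : ZMod 3, decide (a + b = 2) =
      ((decide (a = 1) || decide (b = 1)) ^^
        ((decide (a = 1) || decide (b = 2)) ^^ (decide (a = 2) || decide (b = 1)))) := by decide
  simp only [pack, add, Pi.add_apply, add_eq_one, add_eq_two, packBits_or, packBits_xor]

theorem weight_pack (hn : n ≤ 62) (v : Fin n → ZMod 3) : (pack v).weight = hammingNorm v := by
  have one_or_two : ∀ a : ZMod 3, (decide (a = 1) || decide (a = 2)) = decide (a ≠ 0) := by decide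
  have weight_lt : hammingNorm v < 63 := by
    have := hammingNorm_le_card_fintype (x := v)
    rw [Fintype.card_fin] at this
    omega
  have count := packBits_modEq_card fun i => decide (v i ≠ 0)
  simp only [decide_eq_true_eq] at count
  simp only [weight, pack, ← packBits_or, one_or_two]
  exact Nat.mod_eq_of_modEq count weight_lt

/-- The number of words `x ± r₁ ± ⋯ ± rᵢ` with at most `t` distinct rows `rᵢ` taken from the given
list whose weight, plus `k`, plus the number of rows used, is `w`. -/
def countLight (w : ℕ) : List PackedWord → ℕ → ℕ → PackedWord → ℕ
  | [], _, k, x => if k + x.weight = w then 1 else 0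
  | _ :: _, 0, k, x => if k + x.weight = w then 1 else 0
  | r :: rs, t + 1, k, x =>
    countLight w rs (t + 1) k x + countLight w rs t (k + 1) (x.add r) +
      countLight w rs t (k + 1) (x.add r.neg)

variable {l : ℕ}

theorem countLight_eq_card_lightMessagesFrom (hl : l ≤ 62) (w : ℕ) : ∀ {n : ℕ}
    (rows : Matrix (Fin n) (Fin l) (ZMod 3)) (t k : ℕ) (v : Fin l → ZMod 3),
    countLight w (List.ofFn fun i => pack (rows i)) t k (pack v) = #(lightMessagesFrom rows t w k v)
  | 0, rows, t, k, v => by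
    rw [card_lightMessagesFrom_of_forall_eq_zero fun _ _ => Subsingleton.elim _ _,
      List.ofFn_zero, countLight, weight_pack hl]
  | n + 1, rows, 0, k, v => by
    rw [card_lightMessagesFrom_of_forall_eq_zero fun _ light =>
        hammingNorm_eq_zero.mp (Nat.le_zero.mp light),
      List.ofFn_succ, countLight, weight_pack hl]
  | n + 1, rows, t + 1, k, v => by
    have ih (s j : ℕ) (u : Fin l → ZMod 3) :
        countLight w (List.ofFn fun i => pack (rows i.succ)) s j (pack u) = _ :=
      countLight_eq_card_lightMessagesFrom hl w (vecTail rows) s j u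
    rw [List.ofFn_succ, countLight, ← pack_neg, ← pack_add, ← pack_add, ih, ih, ih,
      card_lightMessagesFrom_succ]

theorem card_lightMessages_eq_countLight (hl : l ≤ 62) (M : Matrix (Fin n) (Fin l) (ZMod 3))
    (t w : ℕ) :
    #(lightMessages M t w) =
      countLight w (List.ofFn fun i => pack (M i)) t 0 (pack (0 : Fin l → ZMod 3)) := by
  rw [lightMessages_eq_lightMessagesFrom, countLight_eq_card_lightMessagesFrom hl]

end PackedWord

end Packing

section AppendixMatrix

open PackedWord

/-- The splitting of the 36 coordinates by parity: the even ones carry the message, the odd ones the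
redundancy. -/
def evenOddEquiv : Fin 18 ⊕ Fin 18 ≃ Fin 36 where
  toFun := Sum.elim (fun i => ⟨2 * i, by omega⟩) fun i => ⟨2 * i + 1, by omega⟩
  invFun j := if j.val % 2 = 0 then .inl ⟨j / 2, by omega⟩ else .inr ⟨j / 2, by omega⟩
  left_inv := by decide
  right_inv := by decide

/-- The inverse of the minor of `A120` in the even rows and even columns. -/
def evenMinorInv : Matrix (Fin 18) (Fin 18) (ZMod 3) :=
  !![0, 1, 2, 2, 0, 0, 1, 1, 1, 0, 1, 2, 2, 1, 1, 0, 0, 2;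
     1, 2, 2, 0, 0, 2, 0, 2, 2, 1, 1, 2, 2, 2, 1, 0, 2, 1;
     1, 2, 2, 1, 2, 0, 1, 0, 2, 2, 2, 0, 1, 0, 2, 0, 0, 2;
     2, 1, 1, 1, 2, 1, 0, 1, 1, 2, 2, 0, 2, 2, 1, 2, 2, 1;
     1, 0, 0, 2, 2, 0, 0, 1, 1, 0, 0, 2, 1, 0, 2, 0, 0, 2;
     1, 1, 2, 1, 2, 1, 0, 1, 1, 1, 2, 0, 1, 0, 2, 1, 0, 0;
     2, 0, 2, 2, 1, 1, 2, 2, 1, 2, 1, 0, 1, 2, 2, 1, 1, 1;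
     0, 2, 1, 1, 1, 2, 1, 1, 1, 1, 2, 1, 1, 0, 1, 0, 1, 0;
     1, 0, 2, 0, 2, 2, 2, 0, 1, 0, 1, 0, 0, 1, 2, 0, 0, 0;
     0, 1, 0, 2, 1, 1, 2, 2, 0, 1, 2, 1, 0, 1, 2, 0, 0, 2;
     0, 1, 0, 2, 2, 0, 1, 0, 2, 1, 0, 1, 1, 0, 2, 0, 2, 0;
     0, 2, 0, 1, 1, 0, 0, 2, 1, 0, 1, 2, 0, 1, 1, 1, 2, 1;
     0, 1, 1, 1, 1, 0, 2, 0, 0, 1, 1, 1, 0, 2, 0, 1, 0, 0;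
     1, 0, 1, 1, 2, 0, 2, 2, 0, 1, 1, 1, 2, 0, 2, 2, 2, 2;
     1, 0, 0, 2, 1, 1, 2, 2, 0, 1, 0, 0, 1, 1, 0, 1, 0, 0;
     2, 1, 1, 0, 1, 1, 1, 2, 2, 1, 1, 1, 2, 0, 2, 1, 1, 1;
     0, 0, 0, 2, 0, 2, 0, 2, 2, 0, 2, 2, 2, 2, 2, 1, 1, 2;
     0, 2, 2, 0, 1, 0, 2, 2, 2, 0, 2, 2, 0, 1, 0, 1, 2, 2]

/-- The redundancy matrix of `C120` for the information set of even coordinates, computed as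
`evenMinorInv` times the minor of `A120` in the even rows and odd columns. -/
def redundancy : Matrix (Fin 18) (Fin 18) (ZMod 3) :=
  !![1, 1, 2, 0, 2, 1, 2, 1, 1, 0, 0, 1, 1, 0, 2, 2, 2, 1;
     2, 1, 0, 2, 1, 1, 1, 2, 0, 2, 1, 0, 0, 0, 0, 2, 2, 0;
     2, 2, 2, 2, 2, 0, 2, 0, 1, 2, 0, 2, 0, 0, 2, 0, 0, 1;
     0, 1, 1, 2, 2, 2, 1, 0, 0, 2, 1, 2, 0, 1, 0, 0, 0, 2;
     1, 2, 1, 2, 0, 1, 1, 1, 1, 2, 0, 2, 0, 2, 1, 1, 0, 2;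
     2, 0, 1, 1, 2, 1, 1, 1, 2, 2, 0, 1, 2, 0, 2, 1, 0, 1;
     2, 1, 2, 2, 1, 1, 0, 1, 1, 1, 2, 0, 0, 1, 2, 0, 2, 1;
     2, 2, 1, 1, 0, 2, 2, 2, 0, 2, 0, 0, 2, 0, 2, 0, 2, 0;
     2, 2, 1, 0, 2, 1, 0, 1, 2, 0, 2, 2, 2, 1, 0, 2, 2, 1;
     2, 0, 1, 0, 2, 1, 2, 0, 2, 1, 0, 2, 1, 0, 1, 0, 2, 0;
     2, 2, 1, 1, 0, 0, 0, 2, 1, 1, 1, 1, 1, 2, 2, 2, 1, 0;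
     0, 2, 2, 1, 0, 2, 2, 1, 2, 0, 1, 1, 1, 2, 2, 0, 2, 2;
     2, 1, 1, 2, 0, 0, 1, 1, 0, 0, 2, 2, 1, 2, 0, 2, 0, 0;
     2, 2, 0, 0, 2, 1, 2, 2, 1, 0, 2, 1, 1, 1, 1, 1, 1, 0;
     2, 2, 2, 2, 0, 2, 0, 0, 0, 0, 1, 2, 0, 1, 2, 2, 2, 0;
     0, 0, 0, 1, 2, 0, 2, 2, 0, 2, 0, 2, 2, 1, 2, 2, 0, 2;
     0, 1, 1, 1, 0, 1, 1, 1, 0, 2, 1, 0, 2, 2, 2, 2, 1, 2;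
     1, 0, 0, 2, 1, 2, 2, 1, 2, 0, 2, 1, 0, 0, 2, 0, 0, 1]

theorem evenMinorInv_mul :
    evenMinorInv * A120.submatrix (evenOddEquiv ∘ Sum.inl) (evenOddEquiv ∘ Sum.inl) = 1 := by
  decide +kernel

theorem evenColumns_mul_redundancy :
    A120.submatrix id (evenOddEquiv ∘ Sum.inl) * redundancy =
      A120.submatrix id (evenOddEquiv ∘ Sum.inr) := by
  decide +kernel

theorem redundancy_mul_transpose : redundancy * redundancyᵀ = -1 := by
  decide +kernel

theorem C120_eq_systematicCode : C120 = systematicCode evenOddEquiv redundancy :=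
  span_rows_eq_systematicCode evenColumns_mul_redundancy _ evenMinorInv_mul

theorem isSelfDualCode_C120 : IsSelfDualCode C120 := fun _ =>
  C120_eq_systematicCode ▸ mem_systematicCode_iff_forall_dotProduct redundancy_mul_transpose

theorem three_dvd_hammingNorm_of_mem_C120 {x : Fin 36 → ZMod 3} (hx : x ∈ C120) :
    3 ∣ hammingNorm x :=
  three_dvd_hammingNorm ((isSelfDualCode_C120 x).mp hx x hx)

theorem ncard_weight_C120 (t s : ℕ) :
    {x | x ∈ C120 ∧ hammingNorm x = t + s + 1}.ncard =
      countLight (t + s + 1) (List.ofFn fun i => pack (redundancy i)) t 0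
          (pack (0 : Fin 18 → ZMod 3)) +
        countLight (t + s + 1) (List.ofFn fun i => pack ((-redundancyᵀ) i)) s 0
          (pack (0 : Fin 18 → ZMod 3)) := by
  rw [C120_eq_systematicCode, ncard_weight_systematicCode _ redundancy_mul_transpose,
    card_lightMessages_eq_countLight (by decide), card_lightMessages_eq_countLight (by decide)]

theorem ncard_weight_three_C120 : {x | x ∈ C120 ∧ hammingNorm x = 3}.ncard = 0 :=
  (ncard_weight_C120 1 1).trans (by decide +kernel)

theorem ncard_weight_six_C120 : {x | x ∈ C120 ∧ hammingNorm x = 6}.ncard = 0 :=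
  (ncard_weight_C120 3 2).trans (by decide +kernel)

theorem ncard_weight_nine_C120 : {x | x ∈ C120 ∧ hammingNorm x = 9}.ncard = 120 :=
  (ncard_weight_C120 4 4).trans (by decide +kernel)

theorem minWeightNine_C120 : MinWeightNine C120 := by
  have hammingNorm_ne {w : ℕ} (h : {x | x ∈ C120 ∧ hammingNorm x = w}.ncard = 0)
      {x : Fin 36 → ZMod 3} (hx : x ∈ C120) : hammingNorm x ≠ w := fun hw =>
    Set.eq_empty_iff_forall_notMem.mp ((Set.ncard_eq_zero (Set.toFinite _)).mp h) x ⟨hx, hw⟩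
  constructor
  · obtain ⟨x, hx, weight⟩ : {x | x ∈ C120 ∧ hammingNorm x = 9}.Nonempty :=
      Set.nonempty_of_ncard_ne_zero (by rw [ncard_weight_nine_C120]; decide)
    exact ⟨x, hx, hammingNorm_ne_zero_iff.mp (by omega), weight⟩
  · rintro _ ⟨x, hx, x_ne_zero, rfl⟩
    have pos := hammingNorm_pos_iff.mpr x_ne_zero
    have three_dvd := three_dvd_hammingNorm_of_mem_C120 hx
    have ne_three := hammingNorm_ne ncard_weight_three_C120 hx
    have ne_six := hammingNorm_ne ncard_weight_six_C120 hx
    omega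

theorem card_row_A120 (i : Fin 36) : #{j | A120 i j = 1} = 15 := by
  revert i
  decide +kernel

theorem card_column_inter_A120 {x y : Fin 36} (hxy : x ≠ y) :
    #{i | A120 i x = 1 ∧ A120 i y = 1} = 6 := by
  revert x y
  decide +kernel

end AppendixMatrix

end TernaryCode

theorem appendix_matrix_A9_eq_120 :
    (∀ i : Fin 36, (Finset.univ.filter fun j => A120 i j = 1).card = 15) ∧
    (∀ x y : Fin 36, x ≠ y →
      (Finset.univ.filter fun i => A120 i x = 1 ∧ A120 i y = 1).card = 6) ∧
    IsSelfDualCode C120 ∧ MinWeightNine C120 ∧ A9 C120 = 120 :=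
  ⟨TernaryCode.card_row_A120, fun _ _ => TernaryCode.card_column_inter_A120,
    TernaryCode.isSelfDualCode_C120, TernaryCode.minWeightNine_C120,
    TernaryCode.ncard_weight_nine_C120⟩
end
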